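/- arXiv:math/0508276 — 5 statements merged into one kernel-verified Lean document; each statement's English description precedes it below -/
import Mathlib

section
/- Under Assumption 3.1, run the greedy boosting algorithm with numbers h_k satisfying |ᾱ_k| ≤ h_k ∈ Λ_k and s_k = ‖f_0‖₁ + Σ_{i=0}^{k−1} h_i, and set ε̄_k = (h_k²/2)·M(s_{k+1}) + ε_k. If Σ_{j=0}^{∞} ε̄_j < ∞ and Σ_{j=0}^{∞} h_j = ∞, then lim_{k→∞} A(f_k) = inf_{f ∈ span(S)} A(f). -/
/-!
Second-order Taylor expansion along `±b`, `b ∈ S`, turns approximate greedy minimization into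
`h k * |∇A (f k) b| ≤ p k`, where `p k = A (f k) - A (f (k + 1)) + ε̄ k`. A linear functional
bounded by `c` on `S` is bounded by `c * ‖·‖₁`, so the gradient inequality for the convex `A`
gives, for every competitor `q ∈ span S`,
`h k * (A (f k) - A q) ≤ ‖f k - q‖₁ * p k ≤ (‖q‖₁ + s k) * p k`.

Let `W k = ‖q‖₁ + 1 + s k`, so that `h k = W (k + 1) - W k`. If `A (f k) - A q ≥ δ > 0` for all
large `k`, then `δ * (log (W (k + 1)) - log (W k)) ≤ δ * h k / W k ≤ p k`, so
`A (f k) + δ * log (W k) - ∑ i < k, ε̄ i` is eventually nonincreasing, contradicting `W k → ∞`.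
Hence `A (f k)` comes arbitrarily close to `A q` or below it infinitely often, and it stays there
because the increments of `A (f k)` are at most the summable `ε̄ k`.
-/

open Filter Finset Set

variable {V : Type*} [AddCommGroup V] [Module ℝ V]

/-- The 1-norm `‖f‖₁` of `f` with respect to the basis set `S`: the infimum of `∑ |wʲ|`
over all representations `f = ∑ wʲ fʲ` with `fʲ ∈ S`. -/
noncomputable def norm1 (S : Set V) (f : V) : ℝ :=
  sInf {c : ℝ | ∃ (n : ℕ) (w : Fin n → ℝ) (g : Fin n → V),
    (∀ i, g i ∈ S) ∧ f = ∑ i, w i • g i ∧ c = ∑ i, |w i|}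

/-- Assumption 3.1: `A` is convex on `span S`, differentiable with gradient `∇A` (a linear
functional), and for `f ∈ span S`, `g ∈ S` the function `h ↦ A (f + h g)` is twice
differentiable with second derivative at `0` bounded by `M (‖f‖₁)`, `M` nondecreasing. -/
structure Assumption31 (S : Set V) (A : V → ℝ) (M : ℝ → ℝ) : Prop where
  convexOn : ConvexOn ℝ (Submodule.span ℝ S : Set V) A
  differentiable : ∃ G : V → V →ₗ[ℝ] ℝ, ∀ f ∈ Submodule.span ℝ S, ∀ g ∈ Submodule.span ℝ S,
    Filter.Tendsto (fun h : ℝ => (A (f + h • g) - A f) / h)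
      (nhdsWithin (0 : ℝ) {(0 : ℝ)}ᶜ) (nhds (G f g))
  mono : Monotone M
  secondDeriv : ∀ f ∈ Submodule.span ℝ S, ∀ g ∈ S, ∃ d1 d2 : ℝ → ℝ,
    (∀ h : ℝ, HasDerivAt (fun t : ℝ => A (f + t • g)) (d1 h) h) ∧
    (∀ h : ℝ, HasDerivAt d1 (d2 h) h) ∧ d2 0 ≤ M (norm1 S f)

/-- Algorithm 2.1 (greedy boosting): `f 0 ∈ span S`; at step `k`, `Λ k` is a closed symmetric
subset of `ℝ` containing `0`, `α k ∈ Λ k`, `g k ∈ S`, `f (k+1) = f k + α k • g k`, and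
`(α k, g k)` approximately minimizes `A (f k + a • b)` over `a ∈ Λ k`, `b ∈ S` up to `ε k ≥ 0`. -/
structure GreedyBoosting (S : Set V) (A : V → ℝ) (f : ℕ → V) (α : ℕ → ℝ) (g : ℕ → V)
    (Λ : ℕ → Set ℝ) (ε : ℕ → ℝ) : Prop where
  init_mem : f 0 ∈ Submodule.span ℝ S
  lambda_closed : ∀ k, IsClosed (Λ k)
  lambda_zero : ∀ k, (0 : ℝ) ∈ Λ k
  lambda_symm : ∀ k, ∀ a ∈ Λ k, -a ∈ Λ k
  eps_nonneg : ∀ k, 0 ≤ ε k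
  alpha_mem : ∀ k, α k ∈ Λ k
  g_mem : ∀ k, g k ∈ S
  step : ∀ k, f (k + 1) = f k + α k • g k
  approx_min : ∀ k, ∀ a ∈ Λ k, ∀ b ∈ S, A (f (k + 1)) ≤ A (f k + a • b) + ε k

section Norm1

open scoped Pointwise

variable {S : Set V} {u v b : V}

/-- The total weights `∑ |wʲ|` of the representations of `v` as a finite combination of elements
of `S`. Their infimum is `norm1 S v`; the set is empty when `v ∉ span S`. -/
def representationWeights (S : Set V) (v : V) : Set ℝ :=
  {c : ℝ | ∃ (n : ℕ) (w : Fin n → ℝ) (g : Fin n → V),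
    (∀ i, g i ∈ S) ∧ v = ∑ i, w i • g i ∧ c = ∑ i, |w i|}

lemma bddBelow_representationWeights : BddBelow (representationWeights S v) := by
  refine ⟨0, ?_⟩
  rintro _ ⟨n, w, g, -, -, rfl⟩
  positivity

lemma representationWeights_nonempty (hv : v ∈ Submodule.span ℝ S) :
    (representationWeights S v).Nonempty := by
  obtain ⟨n, w, g, rfl⟩ := Submodule.mem_span_set'.1 hv
  exact ⟨_, n, w, fun i => g i, fun i => (g i).2, rfl, rfl⟩

lemma representationWeights_add_subset :
    representationWeights S u + representationWeights S v ⊆ representationWeights S (u + v) := by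
  rintro _ ⟨_, ⟨n, w, g, hg, rfl, rfl⟩, _, ⟨m, w', g', hg', rfl, rfl⟩, rfl⟩
  refine ⟨n + m, Fin.append w w', Fin.append g g',
    Fin.addCases (by simpa using hg) (by simpa using hg'), ?_, ?_⟩ <;>
  simp [Fin.sum_univ_add]

lemma representationWeights_subset_neg :
    representationWeights S v ⊆ representationWeights S (-v) := by
  rintro _ ⟨n, w, g, hg, rfl, rfl⟩
  exact ⟨n, -w, g, hg, by simp, by simp⟩

lemma norm1_nonneg (S : Set V) (v : V) : 0 ≤ norm1 S v := by
  refine Real.sInf_nonneg ?_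
  rintro _ ⟨n, w, g, -, -, rfl⟩
  positivity

lemma norm1_add_le (hu : u ∈ Submodule.span ℝ S) (hv : v ∈ Submodule.span ℝ S) :
    norm1 S (u + v) ≤ norm1 S u + norm1 S v :=
  have hu' := representationWeights_nonempty hu
  have hv' := representationWeights_nonempty hv
  (csInf_le_csInf bddBelow_representationWeights (hu'.add hv')
    representationWeights_add_subset).trans_eq
    (csInf_add hu' bddBelow_representationWeights hv' bddBelow_representationWeights)

lemma norm1_neg : norm1 S (-v) = norm1 S v := by
  have h : representationWeights S (-v) = representationWeights S v :=
    Subset.antisymm (by simpa only [neg_neg] using representationWeights_subset_neg (v := -v))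
      representationWeights_subset_neg
  exact congrArg sInf h

lemma norm1_sub_le (hu : u ∈ Submodule.span ℝ S) (hv : v ∈ Submodule.span ℝ S) :
    norm1 S (u - v) ≤ norm1 S u + norm1 S v := by
  simpa only [sub_eq_add_neg, norm1_neg] using norm1_add_le hu (neg_mem hv)

lemma norm1_smul_le_abs (hb : b ∈ S) (t : ℝ) : norm1 S (t • b) ≤ |t| :=
  csInf_le bddBelow_representationWeights
    ⟨1, fun _ => t, fun _ => b, fun _ => hb, by simp, by simp⟩

lemma add_smul_mem_span (hv : v ∈ Submodule.span ℝ S) (hb : b ∈ S) (t : ℝ) :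
    v + t • b ∈ Submodule.span ℝ S :=
  add_mem hv (Submodule.smul_mem _ _ (Submodule.subset_span hb))

lemma norm1_add_smul_le (hv : v ∈ Submodule.span ℝ S) (hb : b ∈ S) (t : ℝ) :
    norm1 S (v + t • b) ≤ norm1 S v + |t| :=
  (norm1_add_le hv (Submodule.smul_mem _ _ (Submodule.subset_span hb))).trans
    (add_le_add_right (norm1_smul_le_abs hb t) _)

lemma abs_map_le_norm1_mul (hv : v ∈ Submodule.span ℝ S) (L : V →ₗ[ℝ] ℝ) {B : ℝ}
    (hB : ∀ b ∈ S, |L b| ≤ B) : |L v| ≤ norm1 S v * B := by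
  have hweights : representationWeights S v ⊆ {c | |L v| ≤ c * B} := by
    rintro _ ⟨n, w, g, hg, rfl, rfl⟩
    calc |L (∑ i, w i • g i)| = |∑ i, w i * L (g i)| := by simp
      _ ≤ ∑ i, |w i * L (g i)| := abs_sum_le_sum_abs _ _
      _ ≤ ∑ i, |w i| * B := sum_le_sum fun i _ => by
        rw [abs_mul]
        exact mul_le_mul_of_nonneg_left (hB _ (hg i)) (abs_nonneg _)
      _ = (∑ i, |w i|) * B := (sum_mul ..).symm
  exact closure_minimal hweights (isClosed_le continuous_const (continuous_mul_const B))
    (csInf_mem_closure (representationWeights_nonempty hv) bddBelow_representationWeights)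

end Norm1

section Calculus

lemma lineDeriv_le_sub_of_convexOn {A : V → ℝ} {K : Set V} (hA : ConvexOn ℝ K A) {v q : V}
    (hv : v ∈ K) (hq : q ∈ K) {d : ℝ} (hd : HasLineDerivAt ℝ A d v (q - v)) :
    d ≤ A q - A v := by
  refine le_of_tendsto hd.tendsto_slope_zero_right ?_
  filter_upwards [Ioo_mem_nhdsGT (zero_lt_one' ℝ)] with t ht
  have hsecant := hA.2 hv hq (sub_nonneg.2 ht.2.le) ht.1.le (by ring)
  rw [show (1 - t) • v + t • q = v + t • (q - v) by module, smul_eq_mul, smul_eq_mul] at hsecant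
  rw [smul_eq_mul, inv_mul_le_iff₀ ht.1]
  linarith

lemma le_taylor_of_deriv2_le {φ φ' φ'' : ℝ → ℝ} {D : Set ℝ} {K x y : ℝ} (hD : Convex ℝ D)
    (hφ : ∀ t ∈ D, HasDerivAt φ (φ' t) t) (hφ' : ∀ t ∈ D, HasDerivAt φ' (φ'' t) t)
    (hK : ∀ t ∈ D, φ'' t ≤ K) (hx : x ∈ D) (hy : y ∈ D) :
    φ y ≤ φ x + φ' x * (y - x) + K / 2 * (y - x) ^ 2 := by
  -- The bound is the gradient inequality at `x` for the convex function `ψ`.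
  let ψ : ℝ → ℝ := fun t => K / 2 * (t - x) ^ 2 - φ t
  have hψ : ∀ t ∈ D, HasDerivAt ψ (K * (t - x) - φ' t) t := fun t ht =>
    (((((hasDerivAt_id t).sub_const x).pow 2).const_mul (K / 2)).sub (hφ t ht)).congr_deriv
      (by simp only [id, Nat.cast_ofNat, Nat.add_one_sub_one, pow_one, mul_one]; ring)
  have hψ' : ∀ t ∈ D, HasDerivAt (fun t => K * (t - x) - φ' t) (K - φ'' t) t := fun t ht =>
    ((((hasDerivAt_id t).sub_const x).const_mul K).sub (hφ' t ht)).congr_deriv (by simp)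
  have hconvex : ConvexOn ℝ D ψ := convexOn_of_hasDerivWithinAt2_nonneg hD
    (fun t ht => (hψ t ht).continuousAt.continuousWithinAt)
    (fun t ht => (hψ t (interior_subset ht)).hasDerivWithinAt)
    (fun t ht => (hψ' t (interior_subset ht)).hasDerivWithinAt)
    (fun t ht => sub_nonneg.2 (hK t (interior_subset ht)))
  have hgrad : (y - x) * (K * (x - x) - φ' x) ≤ ψ y - ψ x :=
    lineDeriv_le_sub_of_convexOn hconvex hx hy ((hψ x hx).hasFDerivAt.hasLineDerivAt (y - x))
  simp only [ψ] at hgrad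
  linarith

end Calculus

namespace Assumption31

variable {S : Set V} {A : V → ℝ} {M : ℝ → ℝ}

lemma exists_hasLineDerivAt (hA : Assumption31 S A M) {v : V} (hv : v ∈ Submodule.span ℝ S) :
    ∃ L : V →ₗ[ℝ] ℝ, ∀ u ∈ Submodule.span ℝ S, HasLineDerivAt ℝ A (L u) v u := by
  obtain ⟨G, hG⟩ := hA.differentiable
  refine ⟨G v, fun u hu => hasLineDerivAt_iff_tendsto_slope_zero.2 ?_⟩
  simpa only [smul_eq_mul, div_eq_inv_mul] using hG v hv u hu

lemma deriv2_le (hA : Assumption31 S A M) {v b : V} (hv : v ∈ Submodule.span ℝ S) (hb : b ∈ S)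
    {φ' φ'' : ℝ → ℝ} (hφ : ∀ t, HasDerivAt (fun u : ℝ => A (v + u • b)) (φ' t) t)
    (hφ' : ∀ t, HasDerivAt φ' (φ'' t) t) (t : ℝ) : φ'' t ≤ M (norm1 S v + |t|) := by
  -- Take `v + t • b` as the base point of the assumed bound.
  obtain ⟨θ', θ'', hθ, hθ', hθ''_le⟩ := hA.secondDeriv _ (add_smul_mem_span hv hb t) b hb
  have hshift : θ' = fun u => φ' (t + u) := funext fun u =>
    (hθ u).unique (by simpa only [add_smul, add_assoc] using (hφ (t + u)).comp_const_add t u)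
  have hθ''_zero : θ'' 0 = φ'' t := (hθ' 0).unique <| by
    simpa only [hshift, add_zero] using (hφ' (t + 0)).comp_const_add t 0
  exact hθ''_zero ▸ hθ''_le.trans (hA.mono (norm1_add_smul_le hv hb t))

lemma apply_add_smul_le (hA : Assumption31 S A M) {v b : V} (hv : v ∈ Submodule.span ℝ S)
    (hb : b ∈ S) {d : ℝ} (hd : HasLineDerivAt ℝ A d v b) (t : ℝ) :
    A (v + t • b) ≤ A v + t * d + t ^ 2 / 2 * M (norm1 S v + |t|) := by
  obtain ⟨φ', φ'', hφ, hφ', -⟩ := hA.secondDeriv v hv b hb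
  have hφ''_le : ∀ u ∈ uIcc 0 t, φ'' u ≤ M (norm1 S v + |t|) := fun u hu =>
    (hA.deriv2_le hv hb hφ hφ' u).trans <| hA.mono <|
      add_le_add_right (by simpa using abs_sub_left_of_mem_uIcc hu) _
  have htaylor := le_taylor_of_deriv2_le (convex_uIcc 0 t) (fun u _ => hφ u) (fun u _ => hφ' u)
    hφ''_le left_mem_uIcc right_mem_uIcc
  rw [(hφ 0).unique hd] at htaylor
  simp only [zero_smul, add_zero, sub_zero] at htaylor
  linarith

lemma abs_mul_lineDeriv_le (hA : Assumption31 S A M) {v v' b : V} {h r ε d : ℝ}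
    (hv : v ∈ Submodule.span ℝ S) (hb : b ∈ S) (hpos : A v' ≤ A (v + h • b) + ε)
    (hneg : A v' ≤ A (v + (-h) • b) + ε) (hr : norm1 S v + |h| ≤ r)
    (hd : HasLineDerivAt ℝ A d v b) :
    |h * d| ≤ A v - A v' + (h ^ 2 / 2 * M r + ε) := by
  have htaylor_pos := hA.apply_add_smul_le hv hb hd h
  have htaylor_neg := hA.apply_add_smul_le hv hb hd (-h)
  have hM := mul_le_mul_of_nonneg_left (hA.mono hr) (by positivity : 0 ≤ h ^ 2 / 2)
  rw [neg_sq, abs_neg] at htaylor_neg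
  rw [abs_le]
  constructor <;> linarith

end Assumption31

/-- A sequence in `span S` whose `k`-th step has 1-norm at most `h k` and decreases `A` at least as
much, up to `ε k`, as every step `± h k • b` with `b ∈ S`. In greedy boosting each step
is a multiple of a single element of `S`. -/
structure IsGreedyDescent (S : Set V) (A : V → ℝ) (f : ℕ → V) (h ε : ℕ → ℝ) : Prop where
  mem_span : ∀ k, f k ∈ Submodule.span ℝ S
  norm1_step_le : ∀ k, norm1 S (f (k + 1) - f k) ≤ h k
  apply_succ_le_pos : ∀ k, ∀ b ∈ S, A (f (k + 1)) ≤ A (f k + h k • b) + ε k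
  apply_succ_le_neg : ∀ k, ∀ b ∈ S, A (f (k + 1)) ≤ A (f k + (-h k) • b) + ε k

namespace IsGreedyDescent

variable {S : Set V} {A : V → ℝ} {M : ℝ → ℝ} {f : ℕ → V} {h ε : ℕ → ℝ}

lemma h_nonneg (hf : IsGreedyDescent S A f h ε) (k : ℕ) : 0 ≤ h k :=
  (norm1_nonneg _ _).trans (hf.norm1_step_le k)

lemma norm1_le_add_sum (hf : IsGreedyDescent S A f h ε) (k : ℕ) :
    norm1 S (f k) ≤ norm1 S (f 0) + ∑ i ∈ range k, h i := by
  induction k with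
  | zero => simp
  | succ k ih =>
    have hadd := norm1_add_le (hf.mem_span k) (sub_mem (hf.mem_span (k + 1)) (hf.mem_span k))
    rw [add_sub_cancel] at hadd
    rw [sum_range_succ]
    linarith [hf.norm1_step_le k]

lemma abs_mul_lineDeriv_le (hf : IsGreedyDescent S A f h ε) (hA : Assumption31 S A M) {b : V}
    (hb : b ∈ S) {k : ℕ} {d : ℝ} (hd : HasLineDerivAt ℝ A d (f k) b) :
    |h k * d| ≤ A (f k) - A (f (k + 1)) +
      (h k ^ 2 / 2 * M (norm1 S (f 0) + ∑ i ∈ range (k + 1), h i) + ε k) := by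
  refine hA.abs_mul_lineDeriv_le (hf.mem_span k) hb (hf.apply_succ_le_pos k b hb)
    (hf.apply_succ_le_neg k b hb) ?_ hd
  rw [abs_of_nonneg (hf.h_nonneg k), sum_range_succ, ← add_assoc]
  exact add_le_add_left (hf.norm1_le_add_sum k) _

lemma apply_succ_le (hf : IsGreedyDescent S A f h ε) (hA : Assumption31 S A M)
    (hS : S.Nonempty) (k : ℕ) :
    A (f (k + 1)) ≤ A (f k) +
      (h k ^ 2 / 2 * M (norm1 S (f 0) + ∑ i ∈ range (k + 1), h i) + ε k) := by
  obtain ⟨b, hb⟩ := hS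
  obtain ⟨L, hL⟩ := hA.exists_hasLineDerivAt (hf.mem_span k)
  linarith [(abs_nonneg _).trans (hf.abs_mul_lineDeriv_le hA hb (hL b (Submodule.subset_span hb)))]

lemma mul_sub_le_norm1_sub_mul (hf : IsGreedyDescent S A f h ε) (hA : Assumption31 S A M)
    {q : V} (hq : q ∈ Submodule.span ℝ S) (k : ℕ) :
    h k * (A (f k) - A q) ≤ norm1 S (f k - q) * (A (f k) - A (f (k + 1)) +
      (h k ^ 2 / 2 * M (norm1 S (f 0) + ∑ i ∈ range (k + 1), h i) + ε k)) := by
  have hfk := hf.mem_span k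
  obtain ⟨L, hL⟩ := hA.exists_hasLineDerivAt hfk
  have hgrad : A (f k) - A q ≤ L (f k - q) := by
    have hslope := lineDeriv_le_sub_of_convexOn hA.convexOn hfk hq (hL _ (sub_mem hq hfk))
    rw [← neg_sub (f k) q, map_neg] at hslope
    linarith
  calc h k * (A (f k) - A q) ≤ h k * L (f k - q) :=
        mul_le_mul_of_nonneg_left hgrad (hf.h_nonneg k)
    _ ≤ |(h k • L) (f k - q)| := le_abs_self _
    _ ≤ _ := abs_map_le_norm1_mul (sub_mem hfk hq) _ fun b hb =>
      hf.abs_mul_lineDeriv_le hA hb (hL b (Submodule.subset_span hb))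

end IsGreedyDescent

lemma GreedyBoosting.isGreedyDescent {S : Set V} {A : V → ℝ} {f : ℕ → V} {α : ℕ → ℝ} {g : ℕ → V}
    {Λ : ℕ → Set ℝ} {ε h : ℕ → ℝ} (hboost : GreedyBoosting S A f α g Λ ε)
    (hα : ∀ k, |α k| ≤ h k) (hΛ : ∀ k, h k ∈ Λ k) : IsGreedyDescent S A f h ε where
  mem_span k := by
    induction k with
    | zero => exact hboost.init_mem
    | succ k ih => exact hboost.step k ▸ add_smul_mem_span ih (hboost.g_mem k) _
  norm1_step_le k := by
    rw [hboost.step, add_sub_cancel_left]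
    exact (norm1_smul_le_abs (hboost.g_mem k) _).trans (hα k)
  apply_succ_le_pos k := hboost.approx_min k _ (hΛ k)
  apply_succ_le_neg k := hboost.approx_min k _ (hboost.lambda_symm k _ (hΛ k))

section Sequences

variable {a e W : ℕ → ℝ} {c c' : ℝ}

lemma eventually_lt_of_frequently_lt_of_summable (he : Summable e)
    (hstep : ∀ k, a (k + 1) ≤ a k + e k) (hc : c < c') (hfreq : ∃ᶠ k in atTop, a k < c) :
    ∀ᶠ k in atTop, a k < c' := by
  let E : ℕ → ℝ := fun n => ∑ i ∈ range n, e i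
  have hanti : Antitone fun k => a k - E k := antitone_nat_of_succ_le fun k => by
    simp only [E, sum_range_succ]
    linarith [hstep k]
  have hE : ∀ᶠ k in atTop, |E k - ∑' i, e i| < (c' - c) / 2 :=
    he.hasSum.tendsto_sum_nat.eventually (Metric.ball_mem_nhds _ (by linarith))
  obtain ⟨k, hak, hEk⟩ := (hfreq.and_eventually hE).exists
  filter_upwards [hE, eventually_ge_atTop k] with n hEn hkn
  have hle : a n - E n ≤ a k - E k := hanti hkn
  linarith [(abs_lt.1 hEn).2, (abs_lt.1 hEk).1]

lemma log_sub_log_le {x y : ℝ} (hx : 0 < x) (hy : 0 < y) :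
    Real.log y - Real.log x ≤ (y - x) / x := by
  rw [← Real.log_div hy.ne' hx.ne', sub_div, div_self hx.ne']
  exact Real.log_le_sub_one_of_pos (div_pos hy hx)

lemma frequently_lt_of_mul_sub_le (he : Summable e) (hW_pos : ∀ k, 0 < W k) (hW_mono : Monotone W)
    (hW : Tendsto W atTop atTop) (hc : c < c')
    (hrec : ∀ k, (W (k + 1) - W k) * (a k - c) ≤ W k * (a k - a (k + 1) + e k)) :
    ∃ᶠ k in atTop, a k < c' := by
  intro hge
  simp only [not_lt] at hge
  obtain ⟨N, hN⟩ := eventually_atTop.1 hge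
  let u : ℕ → ℝ := fun k => a k - ∑ i ∈ range k, e i + (c' - c) * Real.log (W k)
  have hanti : AntitoneOn u (Ici N) := antitoneOn_nat_Ici_of_succ_le fun k hk => by
    have hdecrease : (c' - c) * (Real.log (W (k + 1)) - Real.log (W k)) ≤
        a k - a (k + 1) + e k :=
      calc _ ≤ (c' - c) * ((W (k + 1) - W k) / W k) :=
            mul_le_mul_of_nonneg_left (log_sub_log_le (hW_pos k) (hW_pos _)) (sub_nonneg.2 hc.le)
        _ = (W (k + 1) - W k) * (c' - c) / W k := by ring
        _ ≤ (W (k + 1) - W k) * (a k - c) / W k := div_le_div_of_nonneg_right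
            (mul_le_mul_of_nonneg_left (sub_le_sub_right (hN k hk) c)
              (sub_nonneg.2 (hW_mono k.le_succ))) (hW_pos k).le
        _ ≤ _ := (div_le_iff₀' (hW_pos k)).2 (hrec k)
    simp only [u, sum_range_succ]
    linarith
  have hu : Tendsto u atTop atTop := tendsto_atTop_mono' atTop
    (hge.mono fun k hk => show
      (c' - ∑ i ∈ range k, e i) + (c' - c) * Real.log (W k) ≤ u k by simp only [u]; linarith)
    ((he.hasSum.tendsto_sum_nat.const_sub c').add_atTop
      ((Real.tendsto_log_atTop.comp hW).const_mul_atTop (sub_pos.2 hc)))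
  obtain ⟨k, hk_gt, hk_ge⟩ := ((hu.eventually_gt_atTop (u N)).and (eventually_ge_atTop N)).exists
  exact hk_gt.not_ge (hanti self_mem_Ici hk_ge hk_ge)

lemma eventually_lt_of_mul_sub_le (he : Summable e) (hstep : ∀ k, a (k + 1) ≤ a k + e k)
    (hW_pos : ∀ k, 0 < W k) (hW_mono : Monotone W) (hW : Tendsto W atTop atTop) (hc : c < c')
    (hrec : ∀ k, (W (k + 1) - W k) * (a k - c) ≤ W k * (a k - a (k + 1) + e k)) :
    ∀ᶠ k in atTop, a k < c' := by
  obtain ⟨m, hcm, hmc'⟩ := exists_between hc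
  exact eventually_lt_of_frequently_lt_of_summable he hstep hmc'
    (frequently_lt_of_mul_sub_le he hW_pos hW_mono hW hcm hrec)

lemma tendsto_coe_biInf_of_eventually_lt {ι X : Type*} {l : Filter ι} {A : X → ℝ} {K : Set X}
    {x : ι → X} (hx : ∀ i, x i ∈ K) (hlt : ∀ q ∈ K, ∀ r, A q < r → ∀ᶠ i in l, A (x i) < r) :
    Tendsto (fun i => (A (x i) : EReal)) l (nhds (⨅ q ∈ K, (A q : EReal))) := by
  refine tendsto_order.2 ⟨fun y hy => .of_forall fun i => hy.trans_le (iInf₂_le _ (hx i)),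
    fun y hy => ?_⟩
  obtain ⟨q, hq, hqy⟩ := by simpa only [iInf_lt_iff] using hy
  obtain ⟨r, hqr, hry⟩ := EReal.lt_iff_exists_real_btwn.1 hqy
  exact (hlt q hq r (EReal.coe_lt_coe_iff.1 hqr)).mono fun i hi =>
    (EReal.coe_lt_coe_iff.2 hi).trans hry

end Sequences

theorem limit_convergence_general {S : Set V} {A : V → ℝ} {M : ℝ → ℝ} (hA : Assumption31 S A M)
    (hS : S.Nonempty) {f : ℕ → V} {h ε : ℕ → ℝ} (hf : IsGreedyDescent S A f h ε)
    {s : ℕ → ℝ} (hs : ∀ k, s k = norm1 S (f 0) + ∑ i ∈ range k, h i)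
    (hεbar : Summable fun j => h j ^ 2 / 2 * M (s (j + 1)) + ε j)
    (hhdiv : Tendsto (fun n => ∑ j ∈ range n, h j) atTop atTop) :
    Tendsto (fun k => (A (f k) : EReal)) atTop
      (nhds (⨅ q ∈ (Submodule.span ℝ S : Set V), (A q : EReal))) := by
  obtain rfl : s = fun k => norm1 S (f 0) + ∑ i ∈ range k, h i := funext hs
  refine tendsto_coe_biInf_of_eventually_lt hf.mem_span fun q hq r hqr => ?_
  -- The summand `1` keeps `log (W k)` away from `log 0 = 0`.
  let W : ℕ → ℝ := fun k => norm1 S q + (norm1 S (f 0) + ∑ i ∈ range k, h i) + 1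
  have hnorm : ∀ k, norm1 S (f k - q) ≤ W k := fun k => by
    linarith [norm1_sub_le (hf.mem_span k) hq, hf.norm1_le_add_sum k]
  have hW_pos : ∀ k, 0 < W k := fun k => by
    linarith [norm1_nonneg S q, norm1_nonneg S (f k), hf.norm1_le_add_sum k]
  have hW_succ : ∀ k, W (k + 1) - W k = h k := fun k => by
    simp only [W, sum_range_succ]
    ring
  have hW_mono : Monotone W := monotone_nat_of_le_succ fun k => by
    linarith [hf.h_nonneg k, hW_succ k]
  have hW : Tendsto W atTop atTop := tendsto_atTop_add_const_right _ _
    (tendsto_atTop_add_const_left _ _ (tendsto_atTop_add_const_left _ _ hhdiv))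
  have hdescent := hf.apply_succ_le hA hS
  refine eventually_lt_of_mul_sub_le hεbar hdescent hW_pos hW_mono hW hqr fun k => ?_
  rw [hW_succ]
  exact (hf.mul_sub_le_norm1_sub_mul hA hq k).trans
    (mul_le_mul_of_nonneg_right (hnorm k) (by linarith [hdescent k]))

/-- Theorem 4.1: if `∑ ε̄ j < ∞` and `∑ h j = ∞`, then `A (f k)` converges to
`inf_{f ∈ span S} A f` (as a limit in the extended reals, since the infimum may be `-∞`). -/
theorem limit_convergence (S : Set V) (A : V → ℝ) (M : ℝ → ℝ)
    (hA : Assumption31 S A M)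
    (f : ℕ → V) (α : ℕ → ℝ) (g : ℕ → V) (Λ : ℕ → Set ℝ) (ε : ℕ → ℝ)
    (hboost : GreedyBoosting S A f α g Λ ε)
    (h : ℕ → ℝ) (hα : ∀ k, |α k| ≤ h k) (hΛ : ∀ k, h k ∈ Λ k)
    (s : ℕ → ℝ) (hs : ∀ k, s k = norm1 S (f 0) + ∑ i ∈ Finset.range k, h i)
    (hεbar : Summable fun j => h j ^ 2 / 2 * M (s (j + 1)) + ε j)
    (hhdiv : Tendsto (fun n => ∑ j ∈ Finset.range n, h j) atTop atTop) :
    Tendsto (fun k => (A (f k) : EReal)) atTop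
      (nhds (⨅ q ∈ (Submodule.span ℝ S : Set V), (A q : EReal))) :=
  limit_convergence_general hA ⟨g 0, hboost.g_mem 0⟩ (hboost.isGreedyDescent hα hΛ) hs hεbar hhdiv
end

section
/- Suppose in the greedy boosting algorithm each step-size ᾱ_k is an exact line minimizer: A(f_k + ᾱ_k ḡ_k) = inf_{α ∈ ℝ} A(f_k + α ḡ_k). If there is a constant c > 0 such that inf_k inf_{ξ ∈ (0,1)} A''_{(1−ξ)f_k + ξ f_{k+1}, ḡ_k}(0) ≥ c, then for every k, Σ_{j=0}^{k} ᾱ_j² ≤ (2/c)·[A(f_0) − A(f_{k+1})]. -/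
/-!
Restricted to the line through `f k` in the direction `g k`, the objective minus `c / 2 * u ^ 2` is
convex between `u = 0` and `u = α k`, hence lies above its tangent at `α k`. Since the line
minimizer `α k` is a critical point, the value of this tangent at `0` says that the step decreases
`A` by at least `c / 2 * α k ^ 2`. These decreases telescope.
-/

open Filter Finset Set

variable {V : Type*} [AddCommGroup V] [Module ℝ V]

theorem tangent_le_of_convexOn {D : Set ℝ} {φ : ℝ → ℝ} {φ' x y : ℝ} (hφ : ConvexOn ℝ D φ)
    (hx : x ∈ D) (hy : y ∈ D) (hφ' : HasDerivWithinAt φ φ' D x) :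
    φ x + φ' * (y - x) ≤ φ y := by
  rcases lt_trichotomy x y with hxy | rfl | hyx
  · have hslope := hφ.le_slope_of_hasDerivWithinAt hx hy hxy hφ'
    rw [slope_def_field, le_div_iff₀ (sub_pos.2 hxy)] at hslope
    linarith
  · simp
  · have hslope := hφ.slope_le_of_hasDerivWithinAt hy hx hyx hφ'
    rw [slope_def_field, div_le_iff₀ (sub_pos.2 hyx)] at hslope
    linarith

theorem hasDerivWithinAt_half_mul_norm_sq (m : ℝ) (D : Set ℝ) (x : ℝ) :
    HasDerivWithinAt (fun u : ℝ => m / 2 * ‖u‖ ^ 2) (m * x) D x := by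
  simp only [Real.norm_eq_abs, sq_abs]
  refine (((hasDerivAt_id x).pow 2).const_mul (m / 2)).hasDerivWithinAt.congr_deriv ?_
  simp only [id, Nat.cast_ofNat]
  ring

theorem tangent_parabola_le_of_strongConvexOn {D : Set ℝ} {φ : ℝ → ℝ} {m φ' x y : ℝ}
    (hφ : StrongConvexOn D m φ) (hx : x ∈ D) (hy : y ∈ D) (hφ' : HasDerivWithinAt φ φ' D x) :
    φ x + φ' * (y - x) + m / 2 * (y - x) ^ 2 ≤ φ y := by
  have htangent := tangent_le_of_convexOn (strongConvexOn_iff_convex.1 hφ) hx hy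
    (hφ'.sub (hasDerivWithinAt_half_mul_norm_sq m D x))
  simp only [Real.norm_eq_abs, sq_abs] at htangent
  linarith

theorem strongConvexOn_of_hasDerivWithinAt2_ge {D : Set ℝ} (hD : Convex ℝ D) {φ φ' φ'' : ℝ → ℝ}
    {m : ℝ} (hφ : ContinuousOn φ D)
    (hφ' : ∀ x ∈ interior D, HasDerivWithinAt φ (φ' x) (interior D) x)
    (hφ'' : ∀ x ∈ interior D, HasDerivWithinAt φ' (φ'' x) (interior D) x)
    (hm : ∀ x ∈ interior D, m ≤ φ'' x) : StrongConvexOn D m φ := by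
  rw [strongConvexOn_iff_convex]
  refine convexOn_of_hasDerivWithinAt2_nonneg hD (by fun_prop)
    (fun x hx => (hφ' x hx).sub (hasDerivWithinAt_half_mul_norm_sq m _ x))
    (fun x hx => (hφ'' x hx).sub ((hasDerivWithinAt_id x _).const_mul m)) fun x hx => ?_
  simpa only [mul_one, sub_nonneg] using hm x hx

theorem interior_segment_subset_openSegment (x y : ℝ) :
    interior (segment ℝ x y) ⊆ openSegment ℝ x y := by
  rcases eq_or_ne x y with rfl | hxy
  · simp
  · rw [segment_eq_uIcc, openSegment_eq_Ioo' hxy, Set.uIcc, interior_Icc]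

section Span

variable {R M : Type*} [Semiring R] [AddCommMonoid M] [Module R M] {S : Set M}

theorem add_smul_mem_span_s13 {x y : M} (hx : x ∈ Submodule.span R S) (hy : y ∈ S) (s : R) :
    x + s • y ∈ Submodule.span R S :=
  add_mem hx (Submodule.smul_mem _ s (Submodule.subset_span hy))

theorem mem_span_of_forall_eq_add_smul {f g : ℕ → M} {α : ℕ → R}
    (hf0 : f 0 ∈ Submodule.span R S) (hg : ∀ k, g k ∈ S)
    (hstep : ∀ k, f (k + 1) = f k + α k • g k) (k : ℕ) : f k ∈ Submodule.span R S := by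
  induction k with
  | zero => exact hf0
  | succ k ih => exact hstep k ▸ add_smul_mem_span_s13 ih (hg k) (α k)

end Span

section LineDerivatives

variable {S : Set V} {A : V → ℝ} {d1 d2 : V → V → ℝ → ℝ}

theorem line_deriv_translate
    (hd1 : ∀ f ∈ Submodule.span ℝ S, ∀ g ∈ S, ∀ t : ℝ,
      HasDerivAt (fun u : ℝ => A (f + u • g)) (d1 f g t) t)
    {x y : V} (hx : x ∈ Submodule.span ℝ S) (hy : y ∈ S) (s t : ℝ) :
    d1 (x + s • y) y t = d1 x y (s + t) := by
  have htranslate := (hd1 x hx y hy (s + t)).comp_const_add s t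
  simp only [add_smul, ← add_assoc] at htranslate
  exact (hd1 _ (add_smul_mem_span_s13 hx hy s) y hy t).unique htranslate

theorem line_deriv2_translate
    (hd1 : ∀ f ∈ Submodule.span ℝ S, ∀ g ∈ S, ∀ t : ℝ,
      HasDerivAt (fun u : ℝ => A (f + u • g)) (d1 f g t) t)
    (hd2 : ∀ f ∈ Submodule.span ℝ S, ∀ g ∈ S, ∀ t : ℝ, HasDerivAt (d1 f g) (d2 f g t) t)
    {x y : V} (hx : x ∈ Submodule.span ℝ S) (hy : y ∈ S) (s t : ℝ) :
    d2 (x + s • y) y t = d2 x y (s + t) := by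
  have htranslate := (hd2 x hx y hy (s + t)).comp_const_add s t
  simp only [← line_deriv_translate hd1 hx hy] at htranslate
  exact (hd2 _ (add_smul_mem_span_s13 hx hy s) y hy t).unique htranslate

theorem half_mul_sq_le_decrease
    (hd1 : ∀ f ∈ Submodule.span ℝ S, ∀ g ∈ S, ∀ t : ℝ,
      HasDerivAt (fun u : ℝ => A (f + u • g)) (d1 f g t) t)
    (hd2 : ∀ f ∈ Submodule.span ℝ S, ∀ g ∈ S, ∀ t : ℝ, HasDerivAt (d1 f g) (d2 f g t) t)
    {x y : V} (hx : x ∈ Submodule.span ℝ S) (hy : y ∈ S) {a c : ℝ}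
    (hdescent : a * d1 x y a ≤ 0)
    (hlb : ∀ ξ ∈ Set.Ioo (0 : ℝ) 1, c ≤ d2 ((1 - ξ) • x + ξ • (x + a • y)) y 0) :
    c / 2 * a ^ 2 ≤ A x - A (x + a • y) := by
  have hcurv : ∀ u ∈ interior (segment ℝ 0 a), c ≤ d2 x y u := by
    intro u hu
    obtain ⟨ξ, hξ, rfl⟩ :=
      (openSegment_eq_image ℝ 0 a).subset (interior_segment_subset_openSegment 0 a hu)
    have hpoint : (1 - ξ) • x + ξ • (x + a • y) = x + (ξ * a) • y := by module
    have hlbξ := hlb ξ hξ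
    rw [hpoint, line_deriv2_translate hd1 hd2 hx hy] at hlbξ
    simpa using hlbξ
  have hstrong : StrongConvexOn (segment ℝ 0 a) c (fun u : ℝ => A (x + u • y)) :=
    strongConvexOn_of_hasDerivWithinAt2_ge (convex_segment 0 a)
      (fun u _ => (hd1 x hx y hy u).continuousAt.continuousWithinAt)
      (fun u _ => (hd1 x hx y hy u).hasDerivWithinAt)
      (fun u _ => (hd2 x hx y hy u).hasDerivWithinAt) hcurv
  have hparabola := tangent_parabola_le_of_strongConvexOn hstrong (right_mem_segment ℝ 0 a)
    (left_mem_segment ℝ 0 a) (hd1 x hx y hy a).hasDerivWithinAt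
  simp only [zero_smul, add_zero] at hparabola
  linarith

end LineDerivatives

/-- The condition `hdescent` says that `α k` does not overshoot: the derivative of `A` along the
step, taken at its end point, is still nonpositive. -/
theorem exact_line_search_stepsize_bound_general (S : Set V) (A : V → ℝ)
    (d1 d2 : V → V → ℝ → ℝ)
    (hd1 : ∀ f ∈ Submodule.span ℝ S, ∀ g ∈ S, ∀ t : ℝ,
      HasDerivAt (fun u : ℝ => A (f + u • g)) (d1 f g t) t)
    (hd2 : ∀ f ∈ Submodule.span ℝ S, ∀ g ∈ S, ∀ t : ℝ, HasDerivAt (d1 f g) (d2 f g t) t)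
    (f : ℕ → V) (α : ℕ → ℝ) (g : ℕ → V)
    (hf0 : f 0 ∈ Submodule.span ℝ S) (hg : ∀ k, g k ∈ S)
    (hstep : ∀ k, f (k + 1) = f k + α k • g k)
    (hdescent : ∀ k, α k * d1 (f k) (g k) (α k) ≤ 0)
    (c : ℝ) (hc : 0 < c)
    (hlb : ∀ k, ∀ ξ ∈ Set.Ioo (0 : ℝ) 1, c ≤ d2 ((1 - ξ) • f k + ξ • f (k + 1)) (g k) 0)
    (k : ℕ) :
    ∑ j ∈ Finset.range (k + 1), α j ^ 2 ≤ 2 / c * (A (f 0) - A (f (k + 1))) := by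
  have hf := mem_span_of_forall_eq_add_smul hf0 hg hstep
  have hdecrease : ∀ j, c / 2 * α j ^ 2 ≤ A (f j) - A (f (j + 1)) := fun j =>
    hstep j ▸ half_mul_sq_le_decrease hd1 hd2 (hf j) (hg j) (hdescent j) (hstep j ▸ hlb j)
  have htotal : c / 2 * ∑ j ∈ Finset.range (k + 1), α j ^ 2 ≤ A (f 0) - A (f (k + 1)) := by
    rw [Finset.mul_sum, ← Finset.sum_range_sub' (fun j => A (f j))]
    exact Finset.sum_le_sum fun j _ => hdecrease j
  rwa [← inv_div, ← div_eq_inv_mul, le_div_iff₀' (half_pos hc)]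

/-- Lemma A.1: if each step-size `α k` is an exact line minimizer and
`A''_{(1-ξ) f k + ξ f (k+1), g k}(0) ≥ c > 0` for all `k` and `ξ ∈ (0,1)`, then
`∑_{j=0}^{k} (α j)² ≤ (2/c) (A (f 0) - A (f (k+1)))`. Here `d1 f g` and `d2 f g` are the
first and second derivatives of `h ↦ A (f + h g)`. -/
theorem exact_line_search_stepsize_bound (S : Set V) (A : V → ℝ)
    (hconv : ConvexOn ℝ (Submodule.span ℝ S : Set V) A)
    (d1 d2 : V → V → ℝ → ℝ)
    (hd1 : ∀ f ∈ Submodule.span ℝ S, ∀ g ∈ S, ∀ t : ℝ,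
      HasDerivAt (fun u : ℝ => A (f + u • g)) (d1 f g t) t)
    (hd2 : ∀ f ∈ Submodule.span ℝ S, ∀ g ∈ S, ∀ t : ℝ, HasDerivAt (d1 f g) (d2 f g t) t)
    (f : ℕ → V) (α : ℕ → ℝ) (g : ℕ → V)
    (hf0 : f 0 ∈ Submodule.span ℝ S) (hg : ∀ k, g k ∈ S)
    (hstep : ∀ k, f (k + 1) = f k + α k • g k)
    (hexact : ∀ k (b : ℝ), A (f (k + 1)) ≤ A (f k + b • g k))
    (c : ℝ) (hc : 0 < c)
    (hlb : ∀ k, ∀ ξ ∈ Set.Ioo (0 : ℝ) 1, c ≤ d2 ((1 - ξ) • f k + ξ • f (k + 1)) (g k) 0)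
    (k : ℕ) :
    ∑ j ∈ Finset.range (k + 1), α j ^ 2 ≤ 2 / c * (A (f 0) - A (f (k + 1))) := by
  have hcrit : ∀ j, d1 (f j) (g j) (α j) = 0 := fun j =>
    IsLocalMin.hasDerivAt_eq_zero (.of_forall (hstep j ▸ hexact j))
      (hd1 _ (mem_span_of_forall_eq_add_smul hf0 hg hstep j) _ (hg j) (α j))
  exact exact_line_search_stepsize_bound_general S A d1 d2 hd1 hd2 f α g hf0 hg hstep
    (fun j => (mul_eq_zero_of_right _ (hcrit j)).le) c hc hlb k
end

section
/- (Exponential loss with exact line search.) Let A(f) = ln E_{X,Y} exp(−f(X)Y) with y = ±1 and sup_{g∈S,x}|g(x)| ≤ 1. Assume inf_{g∈S} E_X [ |g(X)|·√(P(Y=1|X)·P(Y=−1|X)) ] > 0 and that each step-size ᾱ_k of the greedy boosting algorithm exactly minimizes α ↦ A(f_k + α ḡ_k) over ℝ. Then inf_k inf_{ξ∈(0,1)} A''_{(1−ξ)f_k + ξ f_{k+1}, ḡ_k}(0) ≥ exp(−2A(f_0))·( E_X [ |ḡ_k(X)|·√(2 P(Y=1|X) P(Y=−1|X)) ] )² >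 0; consequently Σ_{j} ᾱ_j² < ∞. -/
open Filter Finset Set MeasureTheory

/-!
Along a line `u ↦ F + u • g` the objective is a log-partition function, so `A''` is the variance of
`Y g(X)` under the joint law tilted by `exp (-F(X) Y)`. If `W = exp (A F)` is the normalizing
constant of that tilting and `m` the mean of `-Y g(X)`, then conditionally on `X` the second moment
about `m` times the loss is at least `4 g² P(Y=1|X) P(Y=-1|X)`, and the Cauchy–Schwarz inequality
gives `4 (E |g| √(P(Y=1|X) P(Y=-1|X)))² ≤ W² A''`.

An exact line search never increases `A`, and `A` is convex along lines, so `A ≤ A (f 0)` on every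
segment from `f k` to `f (k+1)`. Hence `A''` is bounded below there by a constant `κ > 0`, and as
the derivative vanishes at the new iterate, `A (f (k+1)) + κ/2 (α k)² ≤ A (f k)`. These decrements
are summable because the loss is pointwise at least `2 √(P(Y=1|X) P(Y=-1|X))`.
-/

lemma iteratedDeriv_two_eq {𝕜 F : Type*} [NontriviallyNormedField 𝕜] [NormedAddCommGroup F]
    [NormedSpace 𝕜 F] {f f' f'' : 𝕜 → F} (h₁ : ∀ x, HasDerivAt f (f' x) x)
    (h₂ : ∀ x, HasDerivAt f' (f'' x) x) : iteratedDeriv 2 f = f'' := by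
  rw [iteratedDeriv_succ, iteratedDeriv_one, funext fun x => (h₁ x).deriv,
    funext fun x => (h₂ x).deriv]

lemma add_deriv_mul_add_sq_le_of_le_deriv2 {φ φ' φ'' : ℝ → ℝ} {a b κ : ℝ}
    (h₁ : ∀ x, HasDerivAt φ (φ' x) x) (h₂ : ∀ x, HasDerivAt φ' (φ'' x) x)
    (hκ : ∀ x ∈ uIcc a b, κ ≤ φ'' x) :
    φ a + φ' a * (b - a) + κ / 2 * (b - a) ^ 2 ≤ φ b := by
  set ψ : ℝ → ℝ := fun x => φ x - κ / 2 * (x - a) ^ 2 with hψ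
  have hψ₁ : ∀ x, HasDerivAt ψ (φ' x - κ * (x - a)) x := fun x =>
    ((h₁ x).sub ((((hasDerivAt_id x).sub_const a).pow 2).const_mul (κ / 2))).congr_deriv
      (by simp; ring)
  have hψ₂ : ∀ x, HasDerivAt (fun x => φ' x - κ * (x - a)) (φ'' x - κ) x := fun x =>
    ((h₂ x).sub (((hasDerivAt_id x).sub_const a).const_mul κ)).congr_deriv (by simp)
  have hconvex : ConvexOn ℝ (uIcc a b) ψ :=
    convexOn_of_hasDerivWithinAt2_nonneg (convex_uIcc a b)
      (fun x _ => (hψ₁ x).continuousAt.continuousWithinAt)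
      (fun x _ => (hψ₁ x).hasDerivWithinAt) (fun x _ => (hψ₂ x).hasDerivWithinAt)
      fun x hx => sub_nonneg.2 (hκ x (interior_subset hx))
  have htangent : ψ a + φ' a * (b - a) ≤ ψ b := by
    have hψa : HasDerivAt ψ (φ' a) a := by simpa using hψ₁ a
    rcases lt_trichotomy a b with hab | rfl | hba
    · have h := hconvex.le_slope_of_hasDerivAt left_mem_uIcc right_mem_uIcc hab hψa
      rw [slope_def_field, le_div_iff₀ (sub_pos.2 hab)] at h
      linarith
    · simp
    · have h := hconvex.slope_le_of_hasDerivAt right_mem_uIcc left_mem_uIcc hba hψa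
      rw [slope_def_field, div_le_iff₀ (sub_pos.2 hba)] at h
      linarith
  simp only [hψ, sub_self] at htangent
  linarith

lemma summable_of_add_le {u v : ℕ → ℝ} (hv : ∀ n, 0 ≤ v n) (huv : ∀ n, u (n + 1) + v n ≤ u n)
    (hu : BddBelow (range u)) : Summable v := by
  obtain ⟨m, hm⟩ := hu
  refine summable_of_sum_range_le (c := u 0 - m) hv fun n => ?_
  calc ∑ i ∈ Finset.range n, v i
      ≤ ∑ i ∈ Finset.range n, (u i - u (i + 1)) :=
        Finset.sum_le_sum fun i _ => by linarith [huv i]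
    _ = u 0 - u n := Finset.sum_range_sub' u n
    _ ≤ u 0 - m := by linarith [hm (mem_range_self n)]

lemma sq_integral_le_mul_of_sq_le {Ω : Type*} [MeasurableSpace Ω] {P : Measure Ω}
    {h p q : Ω → ℝ} (hp : Integrable p P) (hq : Integrable q P) (hp₀ : 0 ≤ p) (hq₀ : 0 ≤ q)
    (hpq : ∀ ω, h ω ^ 2 ≤ p ω * q ω) :
    (∫ ω, h ω ∂P) ^ 2 ≤ (∫ ω, p ω ∂P) * ∫ ω, q ω ∂P := by
  by_cases hh : Integrable h P
  · have hdiscrim : discrim (∫ ω, p ω ∂P) (2 * ∫ ω, h ω ∂P) (∫ ω, q ω ∂P) ≤ 0 := by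
      refine discrim_le_zero fun t => ?_
      have hquad : 0 ≤ ∫ ω, (p ω * (t * t) + 2 * h ω * t + q ω) ∂P := by
        refine integral_nonneg fun ω => ?_
        have hsum : 0 ≤ p ω * (t * t) + q ω :=
          add_nonneg (mul_nonneg (hp₀ ω) (mul_self_nonneg t)) (hq₀ ω)
        have hsq : (2 * h ω * t) ^ 2 ≤ (p ω * (t * t) + q ω) ^ 2 := by
          nlinarith [mul_le_mul_of_nonneg_right (hpq ω) (sq_nonneg t),
            sq_nonneg (p ω * (t * t) - q ω)]
        have := neg_le_of_abs_le (abs_le_of_sq_le_sq hsq hsum)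
        dsimp only [Pi.zero_apply]
        linarith
      rw [integral_add (by fun_prop) hq, integral_add (by fun_prop) (by fun_prop),
        integral_mul_const, integral_mul_const, integral_const_mul] at hquad
      exact hquad
    rw [discrim] at hdiscrim
    linarith
  · rw [integral_undef hh]
    simpa using mul_nonneg (integral_nonneg hp₀) (integral_nonneg hq₀)

lemma integral_pos_of_integral_mul_pos {Ω : Type*} [MeasurableSpace Ω] {P : Measure Ω}
    {u v : Ω → ℝ} (hv : Integrable v P) (hv₀ : 0 ≤ v) (huv : 0 < ∫ ω, u ω * v ω ∂P) :
    0 < ∫ ω, v ω ∂P := by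
  refine (integral_nonneg hv₀).lt_of_ne' fun hzero => huv.ne' ?_
  have hv_ae : v =ᵐ[P] 0 := (integral_eq_zero_iff_of_nonneg hv₀ hv).1 hzero
  refine integral_eq_zero_of_ae ?_
  filter_upwards [hv_ae] with ω hω
  simp [hω]

lemma sq_integral_mul_sqrt_mul {Ω : Type*} [MeasurableSpace Ω] {P : Measure Ω} {c : ℝ}
    (hc : 0 ≤ c) (u v w : Ω → ℝ) :
    (∫ ω, u ω * √(c * v ω * w ω) ∂P) ^ 2 = c * (∫ ω, u ω * √(v ω * w ω) ∂P) ^ 2 := by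
  simp only [mul_assoc c, Real.sqrt_mul hc, mul_left_comm _ (√c), integral_const_mul,
    mul_pow, Real.sq_sqrt hc]

section Greedy

variable {E : Type*} [AddCommGroup E] [Module ℝ E] {A : E → ℝ} {f g : ℕ → E} {α : ℕ → ℝ}

/-- The iterates of greedy minimization of `A` along the directions `g k`, the step size `α k` being
an exact minimizer of `b ↦ A (f k + b • g k)`. Minimality is expressed at `f (k + 1)`, that is, at
`f k + α k • g k`. -/
structure IsExactLineSearch (A : E → ℝ) (f g : ℕ → E) (α : ℕ → ℝ) : Prop where
  step : ∀ k, f (k + 1) = f k + α k • g k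
  exact : ∀ k (b : ℝ), A (f (k + 1)) ≤ A (f k + b • g k)

namespace IsExactLineSearch

lemma mem_submodule (h : IsExactLineSearch A f g α) {V : Submodule ℝ E} (hf₀ : f 0 ∈ V)
    (hg : ∀ k, g k ∈ V) : ∀ k, f k ∈ V
  | 0 => hf₀
  | k + 1 => h.step k ▸ V.add_mem (h.mem_submodule hf₀ hg k) (V.smul_mem _ (hg k))

lemma antitone (h : IsExactLineSearch A f g α) : Antitone fun k => A (f k) :=
  antitone_nat_of_succ_le fun k => by simpa using h.exact k 0

lemma lineComb_eq (h : IsExactLineSearch A f g α) (k : ℕ) {a b : ℝ} (hab : a + b = 1) :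
    a • f k + b • f (k + 1) = f k + (a • 0 + b • α k) • g k := by
  obtain rfl : a = 1 - b := eq_sub_of_add_eq hab
  rw [h.step]
  module

variable {φ' φ'' : ℕ → ℝ → ℝ}

lemma le_initial_of_mem_segment (h : IsExactLineSearch A f g α)
    (hφ' : ∀ k t, HasDerivAt (fun u => A (f k + u • g k)) (φ' k t) t)
    (hφ'' : ∀ k t, HasDerivAt (φ' k) (φ'' k t) t) (hnonneg : ∀ k t, 0 ≤ φ'' k t)
    {k : ℕ} {x : E} (hx : x ∈ segment ℝ (f k) (f (k + 1))) : A x ≤ A (f 0) := by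
  have hconvex : ConvexOn ℝ univ fun u => A (f k + u • g k) :=
    convexOn_of_hasDerivWithinAt2_nonneg convex_univ
      (fun t _ => (hφ' k t).continuousAt.continuousWithinAt)
      (fun t _ => (hφ' k t).hasDerivWithinAt) (fun t _ => (hφ'' k t).hasDerivWithinAt)
      fun t _ => hnonneg k t
  obtain ⟨a, b, ha, hb, hab, rfl⟩ := hx
  rw [h.lineComb_eq k hab]
  refine (hconvex.le_max_of_mem_segment (mem_univ 0) (mem_univ (α k))
    ⟨a, b, ha, hb, hab, rfl⟩).trans ?_
  rw [zero_smul, add_zero, ← h.step]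
  exact max_le (h.antitone (Nat.zero_le k)) (h.antitone (Nat.zero_le (k + 1)))

lemma add_mul_sq_le (h : IsExactLineSearch A f g α)
    (hφ' : ∀ k t, HasDerivAt (fun u => A (f k + u • g k)) (φ' k t) t)
    (hφ'' : ∀ k t, HasDerivAt (φ' k) (φ'' k t) t) {k : ℕ} {κ : ℝ}
    (hκ : ∀ t ∈ uIcc (α k) 0, κ ≤ φ'' k t) :
    A (f (k + 1)) + κ / 2 * α k ^ 2 ≤ A (f k) := by
  have hmin : IsLocalMin (fun u => A (f k + u • g k)) (α k) :=
    .of_forall fun b => (congrArg A (h.step k)).symm.trans_le (h.exact k b)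
  have hcrit : φ' k (α k) = 0 := hmin.hasDerivAt_eq_zero (hφ' k (α k))
  simpa [hcrit, ← h.step] using add_deriv_mul_add_sq_le_of_le_deriv2 (hφ' k) (hφ'' k) hκ

lemma summable_sq (h : IsExactLineSearch A f g α)
    (hφ' : ∀ k t, HasDerivAt (fun u => A (f k + u • g k)) (φ' k t) t)
    (hφ'' : ∀ k t, HasDerivAt (φ' k) (φ'' k t) t) (hnonneg : ∀ k t, 0 ≤ φ'' k t)
    {κ : ℝ} (hκ₀ : 0 < κ) (hκ : ∀ k t, A (f k + t • g k) ≤ A (f 0) → κ ≤ φ'' k t)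
    (hbdd : BddBelow (range fun k => A (f k))) : Summable fun k => α k ^ 2 := by
  have hdecrease : ∀ k, A (f (k + 1)) + κ / 2 * α k ^ 2 ≤ A (f k) := fun k => by
    refine h.add_mul_sq_le hφ' hφ'' fun t ht => hκ k t ?_
    rw [Set.uIcc_comm, ← segment_eq_uIcc] at ht
    obtain ⟨a, b, ha, hb, hab, rfl⟩ := ht
    rw [← h.lineComb_eq k hab]
    exact h.le_initial_of_mem_segment hφ' hφ'' hnonneg ⟨a, b, ha, hb, hab, rfl⟩
  exact (summable_mul_left_iff (half_pos hκ₀).ne').1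
    (summable_of_add_le (fun k => by positivity) hdecrease hbdd)

end IsExactLineSearch

end Greedy

lemma measurable_of_mem_span {X : Type*} [MeasurableSpace X] {S : Set (X → ℝ)}
    (hS : ∀ g ∈ S, Measurable g) {F : X → ℝ} (hF : F ∈ Submodule.span ℝ S) : Measurable F :=
  Submodule.span_induction hS measurable_const (fun _ _ _ _ hF hG => hF.add hG)
    (fun c _ _ hF => hF.const_smul c) hF

section ExponentialFamily

open ProbabilityTheory

variable {Ω : Type*} [MeasurableSpace Ω] {P : Measure Ω} {φ Z : Ω → ℝ}

lemma integrableExpSet_tilted_eq_univ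
    (h : ∀ t : ℝ, Integrable (fun ω => Real.exp (φ ω + t * Z ω)) P) :
    integrableExpSet Z (P.tilted φ) = univ := by
  have hφ : Integrable (fun ω => Real.exp (φ ω)) P := by simpa using h 0
  refine eq_univ_of_forall fun u => (integrable_tilted_iff hφ _).2 ?_
  simpa [Real.exp_add] using h u

lemma memLp_tilted_add_mul (h : ∀ t : ℝ, Integrable (fun ω => Real.exp (φ ω + t * Z ω)) P)
    (t : ℝ) (p : NNReal) : MemLp Z p (P.tilted fun ω => φ ω + t * Z ω) := by
  refine memLp_of_mem_interior_integrableExpSet ?_ p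
  rw [integrableExpSet_tilted_eq_univ fun u => by simpa [add_mul, add_assoc] using h (t + u)]
  simp

lemma iteratedDeriv_two_log_integral_exp [NeZero P]
    (h : ∀ t : ℝ, Integrable (fun ω => Real.exp (φ ω + t * Z ω)) P) (t : ℝ) :
    iteratedDeriv 2 (fun u => Real.log (∫ ω, Real.exp (φ ω + u * Z ω) ∂P)) t
      = Var[Z; P.tilted fun ω => φ ω + t * Z ω] := by
  have hφ : Integrable (fun ω => Real.exp (φ ω)) P := by simpa using h 0
  have hcgf : (fun u => Real.log (∫ ω, Real.exp (φ ω + u * Z ω) ∂P))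
      = fun u => Real.log (∫ ω, Real.exp (φ ω) ∂P) + cgf Z (P.tilted φ) u := by
    ext u
    rw [cgf, mgf, integral_exp_tilted]
    simp only [Pi.add_apply]
    rw [Real.log_div (integral_exp_pos (h u)).ne' (integral_exp_pos hφ).ne', add_sub_cancel]
  rw [hcgf, iteratedDeriv_const_add two_pos,
    ← variance_tilted_mul (by simp [integrableExpSet_tilted_eq_univ h]), tilted_tilted hφ]
  rfl

end ExponentialFamily

lemma integrable_withDensity_ofReal_iff {X : Type*} [MeasurableSpace X] {μ : Measure X}
    {ρ : X → ℝ} (hρ : Measurable ρ) (hρ₀ : 0 ≤ ρ) {G : X → ℝ} :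
    Integrable G (μ.withDensity fun x => ENNReal.ofReal (ρ x))
      ↔ Integrable (fun x => ρ x * G x) μ := by
  rw [integrable_withDensity_iff_integrable_smul' (by fun_prop) (by simp)]
  simp [ENNReal.toReal_ofReal (hρ₀ _)]

lemma integral_withDensity_ofReal {X : Type*} [MeasurableSpace X] {μ : Measure X}
    {ρ : X → ℝ} (hρ : Measurable ρ) (hρ₀ : 0 ≤ ρ) (G : X → ℝ) :
    ∫ x, G x ∂μ.withDensity (fun x => ENNReal.ofReal (ρ x)) = ∫ x, ρ x * G x ∂μ := by
  rw [integral_withDensity_eq_integral_toReal_smul (by fun_prop) (by simp)]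
  simp [ENNReal.toReal_ofReal (hρ₀ _)]

/-- The exponential loss `E exp (-Y y)` of a score `y` when the label `Y = ±1` is `1` with
probability `p`. -/
noncomputable def expLoss (p y : ℝ) : ℝ :=
  p * Real.exp (-y) + (1 - p) * Real.exp y

lemma expLoss_nonneg {p : ℝ} (hp : 0 ≤ p ∧ p ≤ 1) (y : ℝ) : 0 ≤ expLoss p y :=
  add_nonneg (mul_nonneg hp.1 (Real.exp_pos _).le)
    (mul_nonneg (sub_nonneg.2 hp.2) (Real.exp_pos _).le)

lemma two_mul_sqrt_le_expLoss {p : ℝ} (hp : 0 ≤ p ∧ p ≤ 1) (y : ℝ) :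
    2 * √(p * (1 - p)) ≤ expLoss p y := by
  have hexp : Real.exp (-y) * Real.exp y = 1 := by simp [← Real.exp_add]
  refine (abs_le_of_sq_le_sq' ?_ (expLoss_nonneg hp y)).2
  rw [mul_pow, Real.sq_sqrt (mul_nonneg hp.1 (sub_nonneg.2 hp.2)), expLoss]
  linear_combination sq_nonneg (p * Real.exp (-y) - (1 - p) * Real.exp y)
    - 4 * p * (1 - p) * hexp

/-- The loss-weighted second moment `E exp (-Y y) (-Y v - m)²` of `-Y v` about `m`, when the label
`Y = ±1` is `1` with probability `p`. -/
noncomputable def expDeviation (p y v m : ℝ) : ℝ :=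
  p * (Real.exp (-y) * (-v - m) ^ 2) + (1 - p) * (Real.exp y * (v - m) ^ 2)

lemma expDeviation_nonneg {p : ℝ} (hp : 0 ≤ p ∧ p ≤ 1) (y v m : ℝ) : 0 ≤ expDeviation p y v m :=
  add_nonneg (mul_nonneg hp.1 (by positivity)) (mul_nonneg (sub_nonneg.2 hp.2) (by positivity))

/-- With `a = p e⁻ʸ` and `b = (1 - p) eʸ`, so that `a b = p (1 - p)`, the right side exceeds the
left by `(a (v + m) - b (v - m))²`. -/
lemma sq_le_expDeviation_mul_expLoss {p : ℝ} (hp : 0 ≤ p ∧ p ≤ 1) (y v m : ℝ) :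
    (2 * (|v| * √(p * (1 - p)))) ^ 2 ≤ expDeviation p y v m * expLoss p y := by
  have hexp : Real.exp (-y) * Real.exp y = 1 := by simp [← Real.exp_add]
  rw [mul_pow, mul_pow, sq_abs, Real.sq_sqrt (mul_nonneg hp.1 (sub_nonneg.2 hp.2)),
    expDeviation, expLoss]
  linear_combination sq_nonneg (p * Real.exp (-y) * (v + m) - (1 - p) * Real.exp y * (v - m))
    - 4 * v ^ 2 * p * (1 - p) * hexp

lemma neg_mul_add_smul {X : Type*} (F g : X → ℝ) (t : ℝ) (x : X) (y : ℝ) :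
    -(y * (F + t • g) x) = -(y * F x) + t * -(y * g x) := by
  simp only [Pi.add_apply, Pi.smul_apply, smul_eq_mul]
  ring

/-- The joint law on `X × {1, -1} ⊆ X × ℝ` of a point with law `μ` and a label that is `1` with
conditional probability `η`. -/
noncomputable def labelledLaw {X : Type*} [MeasurableSpace X] (μ : Measure X) (η : X → ℝ) :
    Measure (X × ℝ) :=
  (μ.withDensity fun x => ENNReal.ofReal (η x)).map (·, 1)
    + (μ.withDensity fun x => ENNReal.ofReal (1 - η x)).map (·, -1)

/-- The logarithmic exponential risk `A F = ln E exp (-Y F(X))` under `labelledLaw μ η`. -/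
noncomputable def logExpRisk {X : Type*} [MeasurableSpace X] (μ : Measure X) (η F : X → ℝ) : ℝ :=
  Real.log (∫ x, expLoss (η x) (F x) ∂μ)

section LabelledLaw

open ProbabilityTheory

variable {X : Type*} [MeasurableSpace X] {μ : Measure X} {η F g : X → ℝ}

lemma integrable_labelledLaw_iff (hηmeas : Measurable η) (hη : ∀ x, 0 ≤ η x ∧ η x ≤ 1)
    {G : X × ℝ → ℝ} (hG : Measurable G) :
    Integrable G (labelledLaw μ η)
      ↔ Integrable (fun x => η x * G (x, 1)) μ ∧ Integrable (fun x => (1 - η x) * G (x, -1)) μ := by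
  rw [labelledLaw, integrable_add_measure,
    integrable_map_measure hG.aestronglyMeasurable (by fun_prop),
    integrable_map_measure hG.aestronglyMeasurable (by fun_prop),
    integrable_withDensity_ofReal_iff hηmeas fun x => (hη x).1,
    integrable_withDensity_ofReal_iff (hηmeas.const_sub 1) fun x => sub_nonneg.2 (hη x).2]
  rfl

lemma integral_labelledLaw (hηmeas : Measurable η) (hη : ∀ x, 0 ≤ η x ∧ η x ≤ 1)
    {G : X × ℝ → ℝ} (hG : Measurable G) (hGint : Integrable G (labelledLaw μ η)) :
    ∫ z, G z ∂labelledLaw μ η = ∫ x, (η x * G (x, 1) + (1 - η x) * G (x, -1)) ∂μ := by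
  obtain ⟨hpos, hneg⟩ := (integrable_labelledLaw_iff hηmeas hη hG).1 hGint
  rw [labelledLaw, integrable_add_measure] at hGint
  rw [labelledLaw, integral_add_measure hGint.1 hGint.2,
    integral_map (by fun_prop) hG.aestronglyMeasurable,
    integral_map (by fun_prop) hG.aestronglyMeasurable,
    integral_withDensity_ofReal hηmeas fun x => (hη x).1,
    integral_withDensity_ofReal (hηmeas.const_sub 1) fun x => sub_nonneg.2 (hη x).2,
    integral_add hpos hneg]

lemma labelledLaw_univ (hηmeas : Measurable η) (hη : ∀ x, 0 ≤ η x ∧ η x ≤ 1) :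
    labelledLaw μ η univ = μ univ := by
  rw [labelledLaw, Measure.add_apply, Measure.map_apply (by fun_prop) .univ,
    Measure.map_apply (by fun_prop) .univ, preimage_univ, preimage_univ,
    withDensity_apply _ .univ, withDensity_apply _ .univ, ← lintegral_add_left (by fun_prop)]
  simp [← ENNReal.ofReal_add (hη _).1 (sub_nonneg.2 (hη _).2)]

lemma neZero_labelledLaw [NeZero μ] (hηmeas : Measurable η) (hη : ∀ x, 0 ≤ η x ∧ η x ≤ 1) :
    NeZero (labelledLaw μ η) :=
  ⟨fun h => NeZero.ne μ <| Measure.measure_univ_eq_zero.1 <| by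
    rw [← labelledLaw_univ hηmeas hη, h, Measure.coe_zero, Pi.zero_apply]⟩

lemma integrable_exp_labelledLaw (hηmeas : Measurable η) (hη : ∀ x, 0 ≤ η x ∧ η x ≤ 1)
    (hF : Measurable F) (hFint : Integrable (fun x => expLoss (η x) (F x)) μ) :
    Integrable (fun z : X × ℝ => Real.exp (-(z.2 * F z.1))) (labelledLaw μ η) := by
  have hpos : ∀ x, 0 ≤ η x * Real.exp (-F x) := fun x => mul_nonneg (hη x).1 (Real.exp_pos _).le
  have hneg : ∀ x, 0 ≤ (1 - η x) * Real.exp (F x) := fun x =>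
    mul_nonneg (sub_nonneg.2 (hη x).2) (Real.exp_pos _).le
  rw [integrable_labelledLaw_iff hηmeas hη (by fun_prop)]
  simp only [one_mul, neg_mul, neg_neg]
  constructor
  · refine hFint.mono' (by fun_prop) (.of_forall fun x => ?_)
    rw [Real.norm_of_nonneg (hpos x)]
    exact le_add_of_nonneg_right (hneg x)
  · refine hFint.mono' (by fun_prop) (.of_forall fun x => ?_)
    rw [Real.norm_of_nonneg (hneg x)]
    exact le_add_of_nonneg_left (hpos x)

lemma integral_exp_labelledLaw (hηmeas : Measurable η) (hη : ∀ x, 0 ≤ η x ∧ η x ≤ 1)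
    (hF : Measurable F) (hFint : Integrable (fun x => expLoss (η x) (F x)) μ) :
    ∫ z, Real.exp (-(z.2 * F z.1)) ∂labelledLaw μ η = ∫ x, expLoss (η x) (F x) ∂μ := by
  rw [integral_labelledLaw hηmeas hη (by fun_prop)
    (integrable_exp_labelledLaw hηmeas hη hF hFint)]
  simp [expLoss]

lemma integral_expLoss_pos [NeZero μ] (hηmeas : Measurable η) (hη : ∀ x, 0 ≤ η x ∧ η x ≤ 1)
    (hF : Measurable F) (hFint : Integrable (fun x => expLoss (η x) (F x)) μ) :
    0 < ∫ x, expLoss (η x) (F x) ∂μ := by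
  have := neZero_labelledLaw (μ := μ) hηmeas hη
  rw [← integral_exp_labelledLaw hηmeas hη hF hFint]
  exact integral_exp_pos (integrable_exp_labelledLaw hηmeas hη hF hFint)

lemma integrable_sqrt_mul_one_sub (hηmeas : Measurable η) (hη : ∀ x, 0 ≤ η x ∧ η x ≤ 1)
    (hFint : Integrable (fun x => expLoss (η x) (F x)) μ) :
    Integrable (fun x => √(η x * (1 - η x))) μ := by
  refine hFint.mono' (by fun_prop) (.of_forall fun x => ?_)
  rw [Real.norm_of_nonneg (Real.sqrt_nonneg _)]
  linarith [two_mul_sqrt_le_expLoss (hη x) (F x), Real.sqrt_nonneg (η x * (1 - η x))]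

lemma log_two_mul_integral_sqrt_le_logExpRisk (hηmeas : Measurable η)
    (hη : ∀ x, 0 ≤ η x ∧ η x ≤ 1) (hFint : Integrable (fun x => expLoss (η x) (F x)) μ)
    (hpos : 0 < ∫ x, √(η x * (1 - η x)) ∂μ) :
    Real.log (2 * ∫ x, √(η x * (1 - η x)) ∂μ) ≤ logExpRisk μ η F := by
  refine Real.log_le_log (by positivity) ?_
  rw [← integral_const_mul]
  exact integral_mono ((integrable_sqrt_mul_one_sub hηmeas hη hFint).const_mul 2) hFint
    fun x => two_mul_sqrt_le_expLoss (hη x) (F x)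

lemma bddBelow_range_logExpRisk {ι : Sort*} {G : ι → X → ℝ} {u : X → ℝ}
    (hηmeas : Measurable η) (hη : ∀ x, 0 ≤ η x ∧ η x ≤ 1)
    (hGint : ∀ i, Integrable (fun x => expLoss (η x) (G i x)) μ)
    (hu : 0 < ∫ x, u x * √(η x * (1 - η x)) ∂μ) :
    BddBelow (range fun i => logExpRisk μ η (G i)) :=
  ⟨Real.log (2 * ∫ x, √(η x * (1 - η x)) ∂μ), forall_mem_range.2 fun i =>
    log_two_mul_integral_sqrt_le_logExpRisk hηmeas hη (hGint i) <|
      integral_pos_of_integral_mul_pos (integrable_sqrt_mul_one_sub hηmeas hη (hGint i))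
        (fun _ => Real.sqrt_nonneg _) hu⟩

lemma exists_variance_tilted_labelledLaw_eq [NeZero μ] (hηmeas : Measurable η)
    (hη : ∀ x, 0 ≤ η x ∧ η x ≤ 1) (hF : Measurable F) (hg : Measurable g)
    (hFint : Integrable (fun x => expLoss (η x) (F x)) μ)
    (hL2 : MemLp (fun z => -(z.2 * g z.1)) 2
      ((labelledLaw μ η).tilted fun z => -(z.2 * F z.1))) :
    ∃ m : ℝ, Integrable (fun x => expDeviation (η x) (F x) (g x) m) μ ∧
      Var[fun z => -(z.2 * g z.1); (labelledLaw μ η).tilted fun z => -(z.2 * F z.1)]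
        = (∫ x, expDeviation (η x) (F x) (g x) m ∂μ) / ∫ x, expLoss (η x) (F x) ∂μ := by
  have := neZero_labelledLaw (μ := μ) hηmeas hη
  have hexp := integrable_exp_labelledLaw hηmeas hη hF hFint
  have := isProbabilityMeasure_tilted hexp
  set Q := (labelledLaw μ η).tilted fun z => -(z.2 * F z.1)
  set m := ∫ z, -(z.2 * g z.1) ∂Q with hm
  have hdev : Integrable (fun z : X × ℝ => Real.exp (-(z.2 * F z.1)) * (-(z.2 * g z.1) - m) ^ 2)
      (labelledLaw μ η) :=
    (integrable_tilted_iff hexp _).1 (hL2.sub (memLp_const m)).integrable_sq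
  refine ⟨m, ?_, ?_⟩
  · obtain ⟨hpos, hneg⟩ := (integrable_labelledLaw_iff hηmeas hη (by fun_prop)).1 hdev
    exact (hpos.add hneg).congr (.of_forall fun x => by simp [expDeviation])
  · rw [variance_eq_integral (by fun_prop), ← hm, integral_tilted,
      integral_exp_labelledLaw hηmeas hη hF hFint]
    simp only [smul_eq_mul, div_mul_eq_mul_div]
    rw [integral_div, integral_labelledLaw hηmeas hη (by fun_prop) hdev]
    simp [expDeviation]

lemma four_mul_sq_integral_le_mul_variance [NeZero μ] (hηmeas : Measurable η)
    (hη : ∀ x, 0 ≤ η x ∧ η x ≤ 1) (hF : Measurable F) (hg : Measurable g)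
    (hFint : Integrable (fun x => expLoss (η x) (F x)) μ)
    (hL2 : MemLp (fun z => -(z.2 * g z.1)) 2
      ((labelledLaw μ η).tilted fun z => -(z.2 * F z.1))) :
    4 * (∫ x, |g x| * √(η x * (1 - η x)) ∂μ) ^ 2
      ≤ (∫ x, expLoss (η x) (F x) ∂μ) ^ 2
        * Var[fun z => -(z.2 * g z.1); (labelledLaw μ η).tilted fun z => -(z.2 * F z.1)] := by
  have hW := integral_expLoss_pos hηmeas hη hF hFint
  obtain ⟨m, hdev, hvar⟩ := exists_variance_tilted_labelledLaw_eq hηmeas hη hF hg hFint hL2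
  calc 4 * (∫ x, |g x| * √(η x * (1 - η x)) ∂μ) ^ 2
      = (∫ x, 2 * (|g x| * √(η x * (1 - η x))) ∂μ) ^ 2 := by rw [integral_const_mul]; ring
    _ ≤ (∫ x, expDeviation (η x) (F x) (g x) m ∂μ) * ∫ x, expLoss (η x) (F x) ∂μ :=
        sq_integral_le_mul_of_sq_le hdev hFint (fun x => expDeviation_nonneg (hη x) _ _ m)
          (fun x => expLoss_nonneg (hη x) (F x))
          fun x => sq_le_expDeviation_mul_expLoss (hη x) (F x) (g x) m
    _ = (∫ x, expLoss (η x) (F x) ∂μ) ^ 2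
        * Var[fun z => -(z.2 * g z.1); (labelledLaw μ η).tilted fun z => -(z.2 * F z.1)] := by
        rw [hvar]
        field_simp

lemma integrable_exp_add_mul_labelledLaw (hηmeas : Measurable η) (hη : ∀ x, 0 ≤ η x ∧ η x ≤ 1)
    (hF : Measurable F) (hg : Measurable g)
    (hint : ∀ t : ℝ, Integrable (fun x => expLoss (η x) ((F + t • g) x)) μ) (t : ℝ) :
    Integrable (fun z : X × ℝ => Real.exp (-(z.2 * F z.1) + t * -(z.2 * g z.1)))
      (labelledLaw μ η) := by
  simpa only [neg_mul_add_smul] using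
    integrable_exp_labelledLaw hηmeas hη (hF.add (hg.const_smul t)) (hint t)

lemma iteratedDeriv_two_logExpRisk [NeZero μ] (hηmeas : Measurable η)
    (hη : ∀ x, 0 ≤ η x ∧ η x ≤ 1) (hF : Measurable F) (hg : Measurable g)
    (hint : ∀ t : ℝ, Integrable (fun x => expLoss (η x) ((F + t • g) x)) μ) (t : ℝ) :
    iteratedDeriv 2 (fun u : ℝ => logExpRisk μ η (F + u • g)) t
      = Var[fun z => -(z.2 * g z.1);
          (labelledLaw μ η).tilted fun z => -(z.2 * (F + t • g) z.1)] := by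
  have := neZero_labelledLaw (μ := μ) hηmeas hη
  have hline : (fun u : ℝ => logExpRisk μ η (F + u • g)) = fun u => Real.log
      (∫ z, Real.exp (-(z.2 * F z.1) + u * -(z.2 * g z.1)) ∂labelledLaw μ η) := by
    ext u
    rw [logExpRisk, ← integral_exp_labelledLaw hηmeas hη (hF.add (hg.const_smul u)) (hint u)]
    simp only [neg_mul_add_smul]
  simp only [hline, neg_mul_add_smul]
  exact iteratedDeriv_two_log_integral_exp
    (integrable_exp_add_mul_labelledLaw hηmeas hη hF hg hint) t

lemma exp_neg_mul_sq_integral_le_iteratedDeriv_two [NeZero μ] (hηmeas : Measurable η)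
    (hη : ∀ x, 0 ≤ η x ∧ η x ≤ 1) (hF : Measurable F) (hg : Measurable g)
    (hint : ∀ t : ℝ, Integrable (fun x => expLoss (η x) ((F + t • g) x)) μ) (t : ℝ) :
    Real.exp (-(2 * logExpRisk μ η (F + t • g)))
        * (4 * (∫ x, |g x| * √(η x * (1 - η x)) ∂μ) ^ 2)
      ≤ iteratedDeriv 2 (fun u : ℝ => logExpRisk μ η (F + u • g)) t := by
  have hFt : Measurable (F + t • g) := hF.add (hg.const_smul t)
  have hW := integral_expLoss_pos hηmeas hη hFt (hint t)
  have hL2 : MemLp (fun z => -(z.2 * g z.1)) 2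
      ((labelledLaw μ η).tilted fun z => -(z.2 * (F + t • g) z.1)) := by
    simp only [neg_mul_add_smul]
    exact memLp_tilted_add_mul (integrable_exp_add_mul_labelledLaw hηmeas hη hF hg hint) t 2
  have hexp : Real.exp (-(2 * logExpRisk μ η (F + t • g)))
      = ((∫ x, expLoss (η x) ((F + t • g) x) ∂μ) ^ 2)⁻¹ := by
    rw [logExpRisk, Real.exp_neg, two_mul, Real.exp_add, Real.exp_log hW, sq]
  rw [iteratedDeriv_two_logExpRisk hηmeas hη hF hg hint, hexp, inv_mul_le_iff₀ (by positivity)]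
  exact four_mul_sq_integral_le_mul_variance hηmeas hη hFt hg (hint t) hL2

end LabelledLaw

theorem exp_loss_exact_search_summable_general {X : Type*} [MeasurableSpace X]
    (S : Set (X → ℝ))
    (hSmeas : ∀ g ∈ S, Measurable g)
    (μ : Measure X)
    (η : X → ℝ) (hηmeas : Measurable η) (hη : ∀ x, 0 ≤ η x ∧ η x ≤ 1)
    (A : (X → ℝ) → ℝ)
    (hA : ∀ F : X → ℝ, A F =
      Real.log (∫ x, (η x * Real.exp (-F x) + (1 - η x) * Real.exp (F x)) ∂μ))
    (hInt : ∀ F ∈ Submodule.span ℝ S,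
      Integrable (fun x => η x * Real.exp (-F x) + (1 - η x) * Real.exp (F x)) μ)
    (d1 d2 : (X → ℝ) → (X → ℝ) → ℝ → ℝ)
    (hd1 : ∀ F ∈ Submodule.span ℝ S, ∀ g ∈ S, ∀ t : ℝ,
      HasDerivAt (fun u : ℝ => A (F + u • g)) (d1 F g t) t)
    (hd2 : ∀ F ∈ Submodule.span ℝ S, ∀ g ∈ S, ∀ t : ℝ, HasDerivAt (d1 F g) (d2 F g t) t)
    (hinf : ∃ c : ℝ, 0 < c ∧ ∀ g ∈ S,
      c ≤ ∫ x, |g x| * Real.sqrt (η x * (1 - η x)) ∂μ)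
    (f : ℕ → X → ℝ) (α : ℕ → ℝ) (g : ℕ → X → ℝ)
    (hf0 : f 0 ∈ Submodule.span ℝ S) (hg : ∀ k, g k ∈ S)
    (hstep : ∀ k, f (k + 1) = f k + α k • g k)
    (hexact : ∀ k (b : ℝ), A (f (k + 1)) ≤ A (f k + b • g k)) :
    (∀ k : ℕ, ∀ ξ ∈ Set.Ioo (0 : ℝ) 1,
      Real.exp (-(2 * A (f 0)))
          * (∫ x, |g k x| * Real.sqrt (2 * η x * (1 - η x)) ∂μ) ^ 2
        ≤ d2 ((1 - ξ) • f k + ξ • f (k + 1)) (g k) 0) ∧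
    (∀ k : ℕ, 0 < Real.exp (-(2 * A (f 0)))
        * (∫ x, |g k x| * Real.sqrt (2 * η x * (1 - η x)) ∂μ) ^ 2) ∧
    Summable (fun j => α j ^ 2) := by
  obtain rfl : A = logExpRisk μ η := funext hA
  obtain ⟨c, hc₀, hc⟩ := hinf
  have : NeZero μ := ⟨by rintro rfl; simpa using hc₀.trans_le (hc (g 0) (hg 0))⟩
  have hsearch : IsExactLineSearch (logExpRisk μ η) f g α := ⟨hstep, hexact⟩
  have hgspan : ∀ k, g k ∈ Submodule.span ℝ S := fun k => Submodule.subset_span (hg k)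
  have hf := hsearch.mem_submodule hf0 hgspan
  have hderiv := fun k => hd1 (f k) (hf k) (g k) (hg k)
  have hderiv₂ := fun k => hd2 (f k) (hf k) (g k) (hg k)
  have hcurv : ∀ F ∈ Submodule.span ℝ S, ∀ k t,
      Real.exp (-(2 * logExpRisk μ η (F + t • g k)))
        * (4 * (∫ x, |g k x| * √(η x * (1 - η x)) ∂μ) ^ 2) ≤ d2 F (g k) t := fun F hF k t => by
    rw [← iteratedDeriv_two_eq (hd1 F hF (g k) (hg k)) (hd2 F hF (g k) (hg k))]
    exact exp_neg_mul_sq_integral_le_iteratedDeriv_two hηmeas hη (measurable_of_mem_span hSmeas hF)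
      (hSmeas _ (hg k)) (fun u => hInt _ (add_mem hF (Submodule.smul_mem _ u (hgspan k)))) t
  have hnonneg : ∀ k t, 0 ≤ d2 (f k) (g k) t := fun k t =>
    le_trans (by positivity) (hcurv (f k) (hf k) k t)
  have hcorr : ∀ k, 0 < ∫ x, |g k x| * √(η x * (1 - η x)) ∂μ := fun k => hc₀.trans_le (hc _ (hg k))
  simp only [sq_integral_mul_sqrt_mul zero_le_two]
  refine ⟨fun k ξ hξ => ?_, fun k => ?_, ?_⟩
  · have hmem : (1 - ξ) • f k + ξ • f (k + 1) ∈ segment ℝ (f k) (f (k + 1)) :=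
      ⟨1 - ξ, ξ, sub_nonneg.2 hξ.2.le, hξ.1.le, sub_add_cancel 1 ξ, rfl⟩
    have hle := hsearch.le_initial_of_mem_segment hderiv hderiv₂ hnonneg hmem
    have hspan : (1 - ξ) • f k + ξ • f (k + 1) ∈ Submodule.span ℝ S :=
      add_mem (Submodule.smul_mem _ _ (hf k)) (Submodule.smul_mem _ _ (hf (k + 1)))
    refine le_trans ?_ (hcurv _ hspan k 0)
    rw [zero_smul, add_zero]
    gcongr
    norm_num
  · have := hcorr k
    positivity
  · refine hsearch.summable_sq hderiv hderiv₂ hnonneg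
      (κ := Real.exp (-(2 * logExpRisk μ η (f 0))) * (4 * c ^ 2)) (by positivity)
      (fun k t ht => le_trans ?_ (hcurv (f k) (hf k) k t))
      (bddBelow_range_logExpRisk hηmeas hη (fun k => hInt (f k) (hf k)) (hcorr 0))
    gcongr
    exact hc _ (hg k)

/-- Lemma A.2 (exponential loss with exact line search): with
`A F = ln E_{X,Y} exp(-F(X)Y)`, the joint law of `(X, Y)` being given by the marginal `μ` of
`X` and the conditional probability `η x = P(Y = 1 | X = x)` (so that
`E_{X,Y} G(X,Y) = ∫ (η x · G x 1 + (1 - η x) · G x (-1)) dμ`), if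
`inf_{g ∈ S} E_X |g(X)| √(P(Y=1|X) P(Y=-1|X)) > 0` and each step-size `α k` of the greedy
boosting algorithm exactly minimizes `b ↦ A (f k + b • g k)`, then
`A''_{(1-ξ) f k + ξ f (k+1), g k}(0) ≥ exp(-2 A (f 0)) (E_X |g k(X)| √(2 P(Y=1|X) P(Y=-1|X)))² > 0`
for all `k` and `ξ ∈ (0,1)`; consequently `∑ j (α j)² < ∞`. Here `d1 F g` and `d2 F g`
denote the first and second derivatives of `h ↦ A (F + h g)`. -/
theorem exp_loss_exact_search_summable {X : Type*} [MeasurableSpace X]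
    (S : Set (X → ℝ))
    (hSbd : ∀ g ∈ S, ∀ x : X, |g x| ≤ 1)
    (hSmeas : ∀ g ∈ S, Measurable g)
    (μ : Measure X) [IsProbabilityMeasure μ]
    (η : X → ℝ) (hηmeas : Measurable η) (hη : ∀ x, 0 ≤ η x ∧ η x ≤ 1)
    (A : (X → ℝ) → ℝ)
    (hA : ∀ F : X → ℝ, A F =
      Real.log (∫ x, (η x * Real.exp (-F x) + (1 - η x) * Real.exp (F x)) ∂μ))
    (hInt : ∀ F ∈ Submodule.span ℝ S,
      Integrable (fun x => η x * Real.exp (-F x) + (1 - η x) * Real.exp (F x)) μ)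
    (d1 d2 : (X → ℝ) → (X → ℝ) → ℝ → ℝ)
    (hd1 : ∀ F ∈ Submodule.span ℝ S, ∀ g ∈ S, ∀ t : ℝ,
      HasDerivAt (fun u : ℝ => A (F + u • g)) (d1 F g t) t)
    (hd2 : ∀ F ∈ Submodule.span ℝ S, ∀ g ∈ S, ∀ t : ℝ, HasDerivAt (d1 F g) (d2 F g t) t)
    (hinf : ∃ c : ℝ, 0 < c ∧ ∀ g ∈ S,
      c ≤ ∫ x, |g x| * Real.sqrt (η x * (1 - η x)) ∂μ)
    (f : ℕ → X → ℝ) (α : ℕ → ℝ) (g : ℕ → X → ℝ)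
    (hf0 : f 0 ∈ Submodule.span ℝ S) (hg : ∀ k, g k ∈ S)
    (hstep : ∀ k, f (k + 1) = f k + α k • g k)
    (hexact : ∀ k (b : ℝ), A (f (k + 1)) ≤ A (f k + b • g k)) :
    (∀ k : ℕ, ∀ ξ ∈ Set.Ioo (0 : ℝ) 1,
      Real.exp (-(2 * A (f 0)))
          * (∫ x, |g k x| * Real.sqrt (2 * η x * (1 - η x)) ∂μ) ^ 2
        ≤ d2 ((1 - ξ) • f k + ξ • f (k + 1)) (g k) 0) ∧
    (∀ k : ℕ, 0 < Real.exp (-(2 * A (f 0)))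
        * (∫ x, |g k x| * Real.sqrt (2 * η x * (1 - η x)) ∂μ) ^ 2) ∧
    Summable (fun j => α j ^ 2) := by
  exact exp_loss_exact_search_summable_general S hSmeas μ η hηmeas hη A hA hInt d1 d2 hd1 hd2 hinf
    f α g hf0 hg hstep hexact
end

section
/- (Second-derivative bound for the exponential loss.) Let A(f) = ln E_{X,Y} exp(−f(X)Y), where Y = ±1 and sup_{g∈S,x}|g(x)| ≤ 1. Then for all f ∈ span(S) and g ∈ S, the second derivative of h ↦ A(f + hg) at h = 0 equals E[g(X)²Y² e^{−f(X)Y}]/E[e^{−f(X)Y}] − (E[g(X)Y e^{−f(X)Y}]/E[e^{−f(X)Y}])², and this quantity is at most 1. -/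
open Filter Finset Set MeasureTheory

/-!
Let `ν` be the law `D` tilted by the density `e^{-f(X)Y} / E[e^{-f(X)Y}]`. Then
`A(f + h g) = A(f) + ln E_ν e^{-h g(X)Y}`, so up to a constant `h ↦ A(f + h g)` is the
cumulant-generating function of `-g(X)Y` under `ν`. Its second derivative at `0` is the variance of
`-g(X)Y` under `ν`, and a random variable with values in `[-1, 1]` has variance at most `1`.
-/

section

open ProbabilityTheory

variable {Ω : Type*} [MeasurableSpace Ω] {μ : Measure Ω} {U V : Ω → ℝ}

lemma integrableExpSet_eq_univ_of_mem_Icc [IsFiniteMeasure μ] {a b : ℝ} (hU : AEMeasurable U μ)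
    (hb : ∀ᵐ ω ∂μ, U ω ∈ Set.Icc a b) : integrableExpSet U μ = Set.univ :=
  eq_univ_of_forall fun _ ↦ integrable_exp_mul_of_mem_Icc hU hb

lemma hasDerivAt_cgf {t : ℝ} (ht : t ∈ interior (integrableExpSet U μ)) :
    HasDerivAt (cgf U μ) (deriv (cgf U μ) t) t :=
  (analyticAt_cgf ht).differentiableAt.hasDerivAt

lemma hasDerivAt_deriv_cgf {t : ℝ} (ht : t ∈ interior (integrableExpSet U μ)) :
    HasDerivAt (deriv (cgf U μ)) Var[U; μ.tilted (t * U ·)] t := by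
  rw [variance_tilted_mul ht, iteratedDeriv_succ, iteratedDeriv_one]
  exact (analyticAt_cgf ht).deriv.differentiableAt.hasDerivAt

lemma hasDerivAt_deriv_cgf_zero [IsProbabilityMeasure μ]
    (h0 : 0 ∈ interior (integrableExpSet U μ)) :
    HasDerivAt (deriv (cgf U μ)) Var[U; μ] 0 := by
  simpa using hasDerivAt_deriv_cgf h0

lemma integral_tilted_eq_div (W : Ω → ℝ) :
    ∫ ω, W ω ∂μ.tilted V
      = (∫ ω, W ω * Real.exp (V ω) ∂μ) / ∫ ω, Real.exp (V ω) ∂μ := by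
  rw [integral_tilted, ← integral_div]
  congr with ω
  rw [smul_eq_mul]
  ring

lemma variance_tilted_eq_sub [NeZero μ] (hV : Integrable (fun ω ↦ Real.exp (V ω)) μ)
    (hU : MemLp U 2 (μ.tilted V)) :
    Var[U; μ.tilted V]
      = (∫ ω, U ω ^ 2 * Real.exp (V ω) ∂μ) / (∫ ω, Real.exp (V ω) ∂μ)
        - ((∫ ω, U ω * Real.exp (V ω) ∂μ) / (∫ ω, Real.exp (V ω) ∂μ)) ^ 2 := by
  have := isProbabilityMeasure_tilted hV
  simp only [variance_eq_sub hU, integral_tilted_eq_div, Pi.pow_apply]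

lemma log_integral_exp_add_mul [NeZero μ] (hV : Integrable (fun ω ↦ Real.exp (V ω)) μ) {t : ℝ}
    (ht : t ∈ integrableExpSet U (μ.tilted V)) :
    Real.log (∫ ω, Real.exp (V ω + t * U ω) ∂μ)
      = Real.log (∫ ω, Real.exp (V ω) ∂μ) + cgf U (μ.tilted V) t := by
  have := isProbabilityMeasure_tilted hV
  have hmgf : mgf U (μ.tilted V) t
      = (∫ ω, Real.exp (V ω + t * U ω) ∂μ) / ∫ ω, Real.exp (V ω) ∂μ :=
    integral_exp_tilted V fun ω ↦ t * U ω
  rw [cgf, ← Real.log_mul (integral_exp_pos hV).ne' (mgf_pos ht).ne', hmgf,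
    mul_div_cancel₀ _ (integral_exp_pos hV).ne']

theorem exp_loss_second_derivative_general [NeZero μ] {F G Y : Ω → ℝ}
    (hGY : AEMeasurable (fun ω ↦ G ω * Y ω) μ)
    (hGY_le : ∀ᵐ ω ∂μ, |G ω * Y ω| ≤ 1)
    (hFY : Integrable (fun ω ↦ Real.exp (-(F ω * Y ω))) μ) :
    ∃ d1 : ℝ → ℝ,
      (∀ h : ℝ, HasDerivAt
        (fun t : ℝ ↦ Real.log (∫ ω, Real.exp (-((F + t • G) ω * Y ω)) ∂μ)) (d1 h) h) ∧
      HasDerivAt d1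
        ((∫ ω, G ω ^ 2 * Y ω ^ 2 * Real.exp (-(F ω * Y ω)) ∂μ)
            / (∫ ω, Real.exp (-(F ω * Y ω)) ∂μ)
          - ((∫ ω, G ω * Y ω * Real.exp (-(F ω * Y ω)) ∂μ)
            / (∫ ω, Real.exp (-(F ω * Y ω)) ∂μ)) ^ 2) 0 ∧
      ((∫ ω, G ω ^ 2 * Y ω ^ 2 * Real.exp (-(F ω * Y ω)) ∂μ)
            / (∫ ω, Real.exp (-(F ω * Y ω)) ∂μ)
          - ((∫ ω, G ω * Y ω * Real.exp (-(F ω * Y ω)) ∂μ)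
            / (∫ ω, Real.exp (-(F ω * Y ω)) ∂μ)) ^ 2) ≤ 1 := by
  set U : Ω → ℝ := fun ω ↦ -(G ω * Y ω)
  set ν := μ.tilted fun ω ↦ -(F ω * Y ω)
  have hν : IsProbabilityMeasure ν := isProbabilityMeasure_tilted hFY
  have hνμ : ν ≪ μ := tilted_absolutelyContinuous μ _
  have hU : AEMeasurable U ν := hGY.neg.mono_ac hνμ
  have hU_mem : ∀ᵐ ω ∂ν, U ω ∈ Set.Icc (-1) 1 :=
    hνμ <| hGY_le.mono fun ω hω ↦ abs_le.1 ((abs_neg _).trans_le hω)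
  have hexp : integrableExpSet U ν = Set.univ := integrableExpSet_eq_univ_of_mem_Icc hU hU_mem
  have hlog (t : ℝ) : Real.log (∫ ω, Real.exp (-((F + t • G) ω * Y ω)) ∂μ)
      = Real.log (∫ ω, Real.exp (-(F ω * Y ω)) ∂μ) + cgf U ν t := by
    have hsum (ω : Ω) : -((F + t • G) ω * Y ω) = -(F ω * Y ω) + t * U ω := by
      simp only [U, Pi.add_apply, Pi.smul_apply, smul_eq_mul]
      ring
    simpa only [hsum] using log_integral_exp_add_mul hFY (hexp ▸ Set.mem_univ t)
  have hvar := variance_tilted_eq_sub hFY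
    (memLp_of_bounded hU_mem hU.aestronglyMeasurable 2)
  simp only [U, neg_sq, mul_pow, neg_mul, integral_neg, neg_div] at hvar
  simp only [hlog, ← hvar]
  refine ⟨deriv (cgf U ν), fun h ↦ (hasDerivAt_cgf (by simp [hexp])).const_add _,
    hasDerivAt_deriv_cgf_zero (by simp [hexp]), ?_⟩
  exact (variance_le_sq_of_bounded hU_mem hU).trans_eq (by norm_num)

end

/-- Section A.1.2: second-derivative bound for the exponential loss. With
`A f = ln E exp(-f(X)Y)`, `Y = ±1` a.s. and `sup_{g ∈ S, x} |g x| ≤ 1`, for every `f` in the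
span of `S` and `g ∈ S`, the function `h ↦ A (f + h g)` is twice differentiable and its
second derivative at `0` equals
`E[g(X)² Y² e^{-f(X)Y}]/E[e^{-f(X)Y}] - (E[g(X) Y e^{-f(X)Y}]/E[e^{-f(X)Y}])²`,
a quantity which is at most `1`. -/
theorem exp_loss_second_derivative {X : Type*} [MeasurableSpace X]
    (S : Set (X → ℝ))
    (hSbd : ∀ g ∈ S, ∀ x : X, |g x| ≤ 1)
    (hSmeas : ∀ g ∈ S, Measurable g)
    (D : Measure (X × ℝ)) [IsProbabilityMeasure D]
    (hD : ∀ᵐ z ∂D, z.2 = 1 ∨ z.2 = -1)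
    (hInt : ∀ f ∈ Submodule.span ℝ S,
      Integrable (fun z : X × ℝ => Real.exp (-(f z.1 * z.2))) D)
    (f : X → ℝ) (hf : f ∈ Submodule.span ℝ S) (g : X → ℝ) (hg : g ∈ S) :
    ∃ d1 : ℝ → ℝ,
      (∀ h : ℝ, HasDerivAt
        (fun t : ℝ => Real.log (∫ z, Real.exp (-((f + t • g) z.1 * z.2)) ∂D)) (d1 h) h) ∧
      HasDerivAt d1
        ((∫ z, g z.1 ^ 2 * z.2 ^ 2 * Real.exp (-(f z.1 * z.2)) ∂D)
            / (∫ z, Real.exp (-(f z.1 * z.2)) ∂D)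
          - ((∫ z, g z.1 * z.2 * Real.exp (-(f z.1 * z.2)) ∂D)
            / (∫ z, Real.exp (-(f z.1 * z.2)) ∂D)) ^ 2) 0 ∧
      ((∫ z, g z.1 ^ 2 * z.2 ^ 2 * Real.exp (-(f z.1 * z.2)) ∂D)
            / (∫ z, Real.exp (-(f z.1 * z.2)) ∂D)
          - ((∫ z, g z.1 * z.2 * Real.exp (-(f z.1 * z.2)) ∂D)
            / (∫ z, Real.exp (-(f z.1 * z.2)) ∂D)) ^ 2) ≤ 1 := by
  have hgY_le : ∀ᵐ z ∂D, |g z.1 * z.2| ≤ 1 := hD.mono fun z hz ↦ by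
    simpa [abs_mul, (abs_eq zero_le_one).2 hz] using hSbd g hg z.1
  exact exp_loss_second_derivative_general (F := fun z : X × ℝ ↦ f z.1) (G := fun z ↦ g z.1)
    (((hSmeas g hg).comp measurable_fst).mul measurable_snd).aemeasurable hgY_le (hInt f hf)
end

section
/- (Second-derivative bound for the p-norm loss.) Fix p ≥ 2 and let A(f) = (1/(2(p−1)))·(E_{X,Y} |f(X) − Y|^p)^{2/p}, where E_Y|Y|^p < ∞ and sup_{g∈S} E_X |g(X)|^p ≤ 1. Then for all f ∈ span(S), g ∈ S and all h ∈ ℝ, the second derivative of t ↦ A(f + tg) at t = h satisfies A''_{f,g}(h) ≤ (E_X |g(X)|^p)^{2/p} ≤ 1. -/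
open Filter Finset Set MeasureTheory

/-!
Put `u = f(X) - Y`, `v = g(X)`, `F t = E|u + t v|^p` and `G = E|v|^p`. Differentiating twice under
the integral sign and applying Hölder's inequality with exponents `p/(p-2)` and `p/2`,
`F'' = p(p-1) E[|u + t v|^{p-2} v^2] ≤ p(p-1) F^{1-2/p} G^{2/p}`. Where `F > 0`, the concavity of
`x ↦ x^{2/p}` gives `(F^{2/p})'' ≤ (2/p) F^{2/p-1} F'' ≤ 2(p-1) G^{2/p}`. If instead `F t₀ = 0`,
then `u = -t₀ v` almost everywhere and `F^{2/p}` is the quadratic `(t - t₀)^2 G^{2/p}`.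
-/

/-- `A` is twice differentiable on `ℝ` with second derivative at most `B` pointwise: the form in
which curvature bounds for the loss along a line are stated. The derivatives are asked for as
functions, since `deriv` is `0` at points of non-differentiability. -/
def HasSecondDerivLE (A B : ℝ → ℝ) : Prop :=
  ∃ d1 d2 : ℝ → ℝ, (∀ t, HasDerivAt A (d1 t) t) ∧ (∀ t, HasDerivAt d1 (d2 t) t) ∧ ∀ t, d2 t ≤ B t

namespace HasSecondDerivLE

variable {A B : ℝ → ℝ}

lemma mono {B' : ℝ → ℝ} (h : HasSecondDerivLE A B) (hB : ∀ t, B t ≤ B' t) :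
    HasSecondDerivLE A B' := by
  obtain ⟨d1, d2, hd1, hd2, hle⟩ := h
  exact ⟨d1, d2, hd1, hd2, fun t => (hle t).trans (hB t)⟩

lemma mul_const (h : HasSecondDerivLE A B) {c : ℝ} (hc : 0 ≤ c) :
    HasSecondDerivLE (fun t => A t * c) (fun t => B t * c) := by
  obtain ⟨d1, d2, hd1, hd2, hle⟩ := h
  exact ⟨fun t => d1 t * c, fun t => d2 t * c, fun t => (hd1 t).mul_const c,
    fun t => (hd2 t).mul_const c, fun t => mul_le_mul_of_nonneg_right (hle t) hc⟩

lemma div_const (h : HasSecondDerivLE A B) {c : ℝ} (hc : 0 ≤ c) :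
    HasSecondDerivLE (fun t => A t / c) (fun t => B t / c) := by
  simpa only [div_eq_mul_inv] using h.mul_const (inv_nonneg.2 hc)

lemma sub_const_sq (t₀ : ℝ) : HasSecondDerivLE (fun t => (t - t₀) ^ 2) (fun _ => 2) := by
  refine ⟨fun t => 2 * (t - t₀), fun _ => 2, fun t => ?_, fun t => ?_, fun _ => le_rfl⟩
  · simpa using ((hasDerivAt_id t).sub_const t₀).fun_pow 2
  · simpa using ((hasDerivAt_id t).sub_const t₀).const_mul 2

lemma rpow_const (h : HasSecondDerivLE A B) (hA : ∀ t, 0 < A t) {α : ℝ} (hα0 : 0 ≤ α)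
    (hα1 : α ≤ 1) :
    HasSecondDerivLE (fun t => A t ^ α) (fun t => α * A t ^ (α - 1) * B t) := by
  obtain ⟨d1, d2, hd1, hd2, hle⟩ := h
  refine ⟨fun t => d1 t * α * A t ^ (α - 1), _,
    fun t => (hd1 t).rpow_const (Or.inl (hA t).ne'),
    fun t => ((hd2 t).mul_const α).mul ((hd1 t).rpow_const (Or.inl (hA t).ne')), fun t => ?_⟩
  have hpow_one := (Real.rpow_pos_of_pos (hA t) (α - 1)).le
  have hpow_two := (Real.rpow_pos_of_pos (hA t) (α - 1 - 1)).le
  have concave_term : d1 t ^ 2 * (α * (α - 1) * A t ^ (α - 1 - 1)) ≤ 0 :=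
    mul_nonpos_of_nonneg_of_nonpos (sq_nonneg _) <|
      mul_nonpos_of_nonpos_of_nonneg (mul_nonpos_of_nonneg_of_nonpos hα0 (by linarith)) hpow_two
  calc d2 t * α * A t ^ (α - 1) + d1 t * α * (d1 t * (α - 1) * A t ^ (α - 1 - 1))
      = α * A t ^ (α - 1) * d2 t + d1 t ^ 2 * (α * (α - 1) * A t ^ (α - 1 - 1)) := by ring
    _ ≤ α * A t ^ (α - 1) * d2 t := add_le_of_nonpos_right concave_term
    _ ≤ α * A t ^ (α - 1) * B t := mul_le_mul_of_nonneg_left (hle t) (mul_nonneg hα0 hpow_one)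

end HasSecondDerivLE

lemma hasDerivAt_abs_rpow_mul_self {q : ℝ} (hq : 0 ≤ q) (x : ℝ) :
    HasDerivAt (fun y : ℝ => |y| ^ q * y) ((q + 1) * |x| ^ q) x := by
  have hcont : Continuous fun y : ℝ => |y| ^ q := continuous_abs.rpow_const fun _ => Or.inr hq
  -- The product rule needs `y ≠ 0`; by continuity its formula persists at `0`, also for `q = 0`,
  -- where `0 ^ 0 = 1`.
  refine hasDerivAt_of_hasDerivAt_of_ne' (g := fun y => (q + 1) * |y| ^ q) (x := 0)
    (fun y hy => ?_) (hcont.mul continuous_id).continuousAt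
    (continuous_const.mul hcont).continuousAt x
  refine (((hasDerivAt_abs hy).rpow_const (p := q) (Or.inl (abs_ne_zero.2 hy))).mul
    (hasDerivAt_id y)).congr_deriv ?_
  have hpow : |y| ^ (q - 1) * |y| = |y| ^ q := by
    rw [← Real.rpow_add_one (abs_ne_zero.2 hy), sub_add_cancel]
  have hsign : (SignType.sign y : ℝ) * y = |y| := sign_mul_self y
  simp only [id_eq]
  linear_combination (q * |y| ^ (q - 1)) * hsign + q * hpow

lemma abs_abs_rpow_mul_self {q : ℝ} (hq : q + 1 ≠ 0) (x : ℝ) : |(|x| ^ q * x)| = |x| ^ (q + 1) := by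
  rcases eq_or_ne x 0 with rfl | hx
  · simp [hq]
  · rw [abs_mul, abs_of_nonneg (Real.rpow_nonneg (abs_nonneg x) q),
      Real.rpow_add_one (abs_ne_zero.2 hx)]

section Integrals

variable {Ω : Type*} [MeasurableSpace Ω] {μ : Measure Ω}

lemma integrable_rpow_mul_rpow {f g : Ω → ℝ} {a b : ℝ} (ha : 0 ≤ a) (hb : 0 ≤ b)
    (hab : a + b = 1) (hf0 : 0 ≤ f) (hg0 : 0 ≤ g) (hf : Integrable f μ) (hg : Integrable g μ) :
    Integrable (fun z => f z ^ a * g z ^ b) μ := by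
  refine ((hf.const_mul a).add (hg.const_mul b)).mono'
    ((hf.aemeasurable.pow_const a).mul (hg.aemeasurable.pow_const b)).aestronglyMeasurable
    (ae_of_all _ fun z => ?_)
  rw [Real.norm_of_nonneg
    (mul_nonneg (Real.rpow_nonneg (hf0 z) a) (Real.rpow_nonneg (hg0 z) b))]
  exact Real.geom_mean_le_arith_mean2_weighted ha hb (hf0 z) (hg0 z) hab

lemma integral_rpow_mul_rpow_le {f g : Ω → ℝ} {a b : ℝ} (ha : 0 ≤ a) (hb : 0 ≤ b)
    (hab : a + b = 1) (hf0 : 0 ≤ f) (hg0 : 0 ≤ g) (hf : Integrable f μ) (hg : Integrable g μ) :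
    ∫ z, f z ^ a * g z ^ b ∂μ ≤ (∫ z, f z ∂μ) ^ a * (∫ z, g z ∂μ) ^ b := by
  have hIf : 0 ≤ ∫ z, f z ∂μ := integral_nonneg hf0
  have hIg : 0 ≤ ∫ z, g z ∂μ := integral_nonneg hg0
  have hfa (z : Ω) : 0 ≤ f z ^ a := Real.rpow_nonneg (hf0 z) a
  have hgb (z : Ω) : 0 ≤ g z ^ b := Real.rpow_nonneg (hg0 z) b
  rw [← ENNReal.ofReal_le_ofReal_iff (by positivity),
    ofReal_integral_eq_lintegral_ofReal (integrable_rpow_mul_rpow ha hb hab hf0 hg0 hf hg)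
      (ae_of_all _ fun z => mul_nonneg (hfa z) (hgb z)),
    ENNReal.ofReal_mul (by positivity), ← ENNReal.ofReal_rpow_of_nonneg hIf ha,
    ← ENNReal.ofReal_rpow_of_nonneg hIg hb,
    ofReal_integral_eq_lintegral_ofReal hf (ae_of_all _ hf0),
    ofReal_integral_eq_lintegral_ofReal hg (ae_of_all _ hg0)]
  simp only [ENNReal.ofReal_mul (hfa _), ← ENNReal.ofReal_rpow_of_nonneg (hf0 _) ha,
    ← ENNReal.ofReal_rpow_of_nonneg (hg0 _) hb]
  exact ENNReal.lintegral_mul_norm_pow_le hf.aemeasurable.ennreal_ofReal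
    hg.aemeasurable.ennreal_ofReal ha hb hab

variable {p : ℝ} {u v : Ω → ℝ}

lemma integrable_abs_rpow_iff_memLp (hp : 0 < p) (hu : AEStronglyMeasurable u μ) :
    Integrable (fun z => |u z| ^ p) μ ↔ MemLp u (ENNReal.ofReal p) μ := by
  simpa only [ENNReal.toReal_ofReal hp.le, Real.norm_eq_abs] using
    integrable_norm_rpow_iff hu (ENNReal.ofReal_pos.2 hp).ne' ENNReal.ofReal_ne_top

lemma integrable_abs_rpow (hp : 0 < p) (hu : MemLp u (ENNReal.ofReal p) μ) :
    Integrable (fun z => |u z| ^ p) μ :=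
  (integrable_abs_rpow_iff_memLp hp hu.aestronglyMeasurable).2 hu

lemma abs_rpow_rpow_div (hp : 0 < p) (x a : ℝ) : (|x| ^ p) ^ (a / p) = |x| ^ a := by
  rw [← Real.rpow_mul (abs_nonneg x), mul_div_cancel₀ a hp.ne']

lemma integrable_abs_rpow_mul_abs_rpow {a b : ℝ} (hp : 0 < p) (ha : 0 ≤ a) (hb : 0 ≤ b)
    (hab : a + b = p) (hu : MemLp u (ENNReal.ofReal p) μ) (hv : MemLp v (ENNReal.ofReal p) μ) :
    Integrable (fun z => |u z| ^ a * |v z| ^ b) μ := by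
  simpa only [abs_rpow_rpow_div hp] using
    integrable_rpow_mul_rpow (div_nonneg ha hp.le) (div_nonneg hb hp.le)
      (by rw [← add_div, hab, div_self hp.ne']) (fun z => Real.rpow_nonneg (abs_nonneg (u z)) p)
      (fun z => Real.rpow_nonneg (abs_nonneg (v z)) p) (integrable_abs_rpow hp hu)
      (integrable_abs_rpow hp hv)

lemma integral_abs_rpow_mul_abs_rpow_le {a b : ℝ} (hp : 0 < p) (ha : 0 ≤ a) (hb : 0 ≤ b)
    (hab : a + b = p) (hu : MemLp u (ENNReal.ofReal p) μ) (hv : MemLp v (ENNReal.ofReal p) μ) :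
    ∫ z, |u z| ^ a * |v z| ^ b ∂μ
      ≤ (∫ z, |u z| ^ p ∂μ) ^ (a / p) * (∫ z, |v z| ^ p ∂μ) ^ (b / p) := by
  simpa only [abs_rpow_rpow_div hp] using
    integral_rpow_mul_rpow_le (div_nonneg ha hp.le) (div_nonneg hb hp.le)
      (by rw [← add_div, hab, div_self hp.ne']) (fun z => Real.rpow_nonneg (abs_nonneg (u z)) p)
      (fun z => Real.rpow_nonneg (abs_nonneg (v z)) p) (integrable_abs_rpow hp hu)
      (integrable_abs_rpow hp hv)

lemma integrable_abs_add_mul_abs_rpow_mul_abs_rpow {a b R : ℝ} (hp : 0 < p) (ha : 0 ≤ a)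
    (hb : 0 ≤ b) (hab : a + b = p) (hR : 0 ≤ R) (hu : MemLp u (ENNReal.ofReal p) μ)
    (hv : MemLp v (ENNReal.ofReal p) μ) :
    Integrable (fun z => (|u z| + R * |v z|) ^ a * |v z| ^ b) μ := by
  refine (integrable_abs_rpow_mul_abs_rpow hp ha hb hab (hu.abs.add (hv.abs.const_mul R))
    hv).congr (ae_of_all _ fun z => ?_)
  have hsum : 0 ≤ |u z| + R * |v z| := by positivity
  simp only [Pi.add_apply, Pi.abs_apply, abs_of_nonneg hsum]

lemma hasDerivAt_integral_comp_add_mul {φ φ' : ℝ → ℝ} {C r : ℝ} {w : Ω → ℝ} {t : ℝ}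
    (hφ : ∀ x, HasDerivAt φ (φ' x) x) (hr : 0 ≤ r) (hφ' : ∀ x, |φ' x| ≤ C * |x| ^ r)
    (hu : AEStronglyMeasurable u μ) (hv : AEStronglyMeasurable v μ)
    (hw : AEStronglyMeasurable w μ) (hint : Integrable (fun z => φ (u z + t * v z) * w z) μ)
    (hdom : Integrable (fun z => (|u z| + (|t| + 1) * |v z|) ^ r * |v z * w z|) μ) :
    HasDerivAt (fun s => ∫ z, φ (u z + s * v z) * w z ∂μ)
      (∫ z, φ' (u z + t * v z) * (v z * w z) ∂μ) t := by
  have hC : 0 ≤ C := by simpa using (abs_nonneg _).trans (hφ' 1)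
  have hφ_cont : Continuous φ := continuous_iff_continuousAt.2 fun x => (hφ x).continuousAt
  have hφ'_meas : Measurable φ' := by
    rw [← funext fun x => (hφ x).deriv]
    exact measurable_deriv φ
  have hline (s : ℝ) : AEStronglyMeasurable (fun z => u z + s * v z) μ :=
    hu.add (hv.const_mul s)
  refine (hasDerivAt_integral_of_dominated_loc_of_deriv_le
    (F := fun s z => φ (u z + s * v z) * w z)
    (F' := fun s z => φ' (u z + s * v z) * (v z * w z))
    (bound := fun z => C * ((|u z| + (|t| + 1) * |v z|) ^ r * |v z * w z|))
    (Metric.ball_mem_nhds t one_pos)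
    (.of_forall fun s => (hφ_cont.comp_aestronglyMeasurable (hline s)).mul hw) hint
    ((hφ'_meas.comp_aemeasurable (hline t).aemeasurable).aestronglyMeasurable.mul (hv.mul hw))
    (ae_of_all _ fun z s hs => ?_) (hdom.const_mul C) (ae_of_all _ fun z s _ => ?_)).2
  · have hs' : |s| ≤ |t| + 1 := by
      linarith [abs_sub_abs_le_abs_sub s t, (Real.dist_eq s t) ▸ Metric.mem_ball.1 hs]
    have hline_le : |u z + s * v z| ≤ |u z| + (|t| + 1) * |v z| :=
      (abs_add_le _ _).trans (by rw [abs_mul]; gcongr)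
    calc ‖φ' (u z + s * v z) * (v z * w z)‖ = |φ' (u z + s * v z)| * |v z * w z| := norm_mul _ _
      _ ≤ C * |u z + s * v z| ^ r * |v z * w z| := by gcongr; exact hφ' _
      _ ≤ C * (|u z| + (|t| + 1) * |v z|) ^ r * |v z * w z| := by gcongr
      _ = _ := mul_assoc _ _ _
  · have haffine : HasDerivAt (fun s => u z + s * v z) (v z) s := by
      simpa using ((hasDerivAt_id s).mul_const (v z)).const_add (u z)
    simpa only [mul_assoc, Function.comp_def] using ((hφ _).comp s haffine).mul_const (w z)

lemma hasDerivAt_integral_abs_add_mul_rpow (hp : 1 < p) (hu : MemLp u (ENNReal.ofReal p) μ)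
    (hv : MemLp v (ENNReal.ofReal p) μ) (t : ℝ) :
    HasDerivAt (fun s => ∫ z, |u z + s * v z| ^ p ∂μ)
      (p * ∫ z, |u z + t * v z| ^ (p - 2) * (u z + t * v z) * v z ∂μ) t := by
  have hp0 : 0 < p := by linarith
  have hgrowth (x : ℝ) : |p * |x| ^ (p - 2) * x| ≤ p * |x| ^ (p - 2 + 1) := by
    rw [mul_assoc, abs_mul, abs_of_pos hp0, abs_abs_rpow_mul_self (by linarith)]
  have hline : MemLp (fun z => u z + t * v z) (ENNReal.ofReal p) μ := hu.add (hv.const_mul t)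
  have hint : Integrable (fun z => |u z + t * v z| ^ p * 1) μ := by
    simpa only [mul_one] using integrable_abs_rpow hp0 hline
  have hdom : Integrable (fun z => (|u z| + (|t| + 1) * |v z|) ^ (p - 2 + 1) * |v z * 1|) μ := by
    simpa only [mul_one, Real.rpow_one] using
      integrable_abs_add_mul_abs_rpow_mul_abs_rpow (b := 1) hp0 (by linarith) zero_le_one
        (by ring) (by positivity) hu hv
  simpa only [mul_one, mul_assoc, integral_const_mul] using
    hasDerivAt_integral_comp_add_mul (fun x => hasDerivAt_abs_rpow x hp) (by linarith) hgrowth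
      hu.1 hv.1 aestronglyMeasurable_const hint hdom

lemma hasDerivAt_integral_abs_add_mul_rpow_mul_self_mul (hp : 2 ≤ p)
    (hu : MemLp u (ENNReal.ofReal p) μ) (hv : MemLp v (ENNReal.ofReal p) μ) (t : ℝ) :
    HasDerivAt (fun s => ∫ z, |u z + s * v z| ^ (p - 2) * (u z + s * v z) * v z ∂μ)
      ((p - 1) * ∫ z, |u z + t * v z| ^ (p - 2) * |v z| ^ (2 : ℝ) ∂μ) t := by
  have hp0 : 0 < p := by linarith
  have hq : 0 ≤ p - 2 := by linarith
  have hline : MemLp (fun z => u z + t * v z) (ENNReal.ofReal p) μ := hu.add (hv.const_mul t)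
  have hgrowth (x : ℝ) : |(p - 2 + 1) * |x| ^ (p - 2)| ≤ (p - 2 + 1) * |x| ^ (p - 2) :=
    (abs_of_nonneg (by positivity)).le
  have hint : Integrable (fun z => |u z + t * v z| ^ (p - 2) * (u z + t * v z) * v z) μ := by
    have hcont : Continuous fun x : ℝ => |x| ^ (p - 2) * x :=
      (continuous_abs.rpow_const fun _ => Or.inr hq).mul continuous_id
    refine (integrable_abs_rpow_mul_abs_rpow (a := p - 2 + 1) hp0 (by linarith) zero_le_one
      (by ring) hline hv).mono' ((hcont.comp_aestronglyMeasurable hline.1).mul hv.1)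
      (ae_of_all _ fun z => ?_)
    rw [norm_mul, Real.norm_eq_abs, Real.norm_eq_abs, abs_abs_rpow_mul_self (by linarith),
      Real.rpow_one]
  have hdom : Integrable (fun z => (|u z| + (|t| + 1) * |v z|) ^ (p - 2) * |v z * v z|) μ := by
    simpa only [Real.rpow_two, sq, abs_mul] using
      integrable_abs_add_mul_abs_rpow_mul_abs_rpow (b := 2) hp0 hq zero_le_two
        (sub_add_cancel p 2) (by positivity) hu hv
  convert hasDerivAt_integral_comp_add_mul (hasDerivAt_abs_rpow_mul_self hq) hq hgrowth
    hu.1 hv.1 hv.1 hint hdom using 1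
  rw [← integral_const_mul]
  congr with z
  rw [Real.rpow_two, sq_abs]
  ring

lemma hasSecondDerivLE_integral_abs_add_mul_rpow (hp : 2 ≤ p) (hu : MemLp u (ENNReal.ofReal p) μ)
    (hv : MemLp v (ENNReal.ofReal p) μ) :
    HasSecondDerivLE (fun t => ∫ z, |u z + t * v z| ^ p ∂μ)
      (fun t => p * (p - 1) *
        ((∫ z, |u z + t * v z| ^ p ∂μ) ^ ((p - 2) / p) * (∫ z, |v z| ^ p ∂μ) ^ (2 / p))) := by
  refine ⟨_, _, hasDerivAt_integral_abs_add_mul_rpow (by linarith) hu hv,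
    fun t => (hasDerivAt_integral_abs_add_mul_rpow_mul_self_mul hp hu hv t).const_mul p,
    fun t => ?_⟩
  rw [← mul_assoc]
  exact mul_le_mul_of_nonneg_left
    (integral_abs_rpow_mul_abs_rpow_le (by linarith) (by linarith) zero_le_two
      (sub_add_cancel p 2) (hu.add (hv.const_mul t)) hv)
    (mul_nonneg (by linarith) (by linarith))

lemma integral_abs_add_mul_rpow_of_eq_zero (hp : 0 < p) (hu : MemLp u (ENNReal.ofReal p) μ)
    (hv : MemLp v (ENNReal.ofReal p) μ) {t₀ : ℝ} (h0 : ∫ z, |u z + t₀ * v z| ^ p ∂μ = 0)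
    (t : ℝ) :
    ∫ z, |u z + t * v z| ^ p ∂μ = |t - t₀| ^ p * ∫ z, |v z| ^ p ∂μ := by
  have hline : MemLp (fun z => u z + t₀ * v z) (ENNReal.ofReal p) μ := hu.add (hv.const_mul t₀)
  rw [integral_eq_zero_iff_of_nonneg (fun z => Real.rpow_nonneg (abs_nonneg _) p)
    (integrable_abs_rpow hp hline)] at h0
  rw [← integral_const_mul]
  refine integral_congr_ae ?_
  filter_upwards [h0] with z hz
  have hline_zero : u z + t₀ * v z = 0 :=
    abs_eq_zero.1 ((Real.rpow_eq_zero (abs_nonneg _) hp.ne').1 hz)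
  rw [← Real.mul_rpow (abs_nonneg _) (abs_nonneg _), ← abs_mul]
  congr 2
  linear_combination hline_zero

lemma hasSecondDerivLE_rpow_integral_of_eq_zero (hp : 0 < p)
    (hu : MemLp u (ENNReal.ofReal p) μ) (hv : MemLp v (ENNReal.ofReal p) μ) {t₀ : ℝ}
    (h0 : ∫ z, |u z + t₀ * v z| ^ p ∂μ = 0) :
    HasSecondDerivLE (fun t => (∫ z, |u z + t * v z| ^ p ∂μ) ^ (2 / p))
      (fun _ => 2 * (∫ z, |v z| ^ p ∂μ) ^ (2 / p)) := by
  have hG : 0 ≤ ∫ z, |v z| ^ p ∂μ := integral_nonneg fun z => Real.rpow_nonneg (abs_nonneg _) p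
  have hquad (t : ℝ) : (∫ z, |u z + t * v z| ^ p ∂μ) ^ (2 / p)
      = (t - t₀) ^ 2 * (∫ z, |v z| ^ p ∂μ) ^ (2 / p) := by
    rw [integral_abs_add_mul_rpow_of_eq_zero hp hu hv h0,
      Real.mul_rpow (Real.rpow_nonneg (abs_nonneg _) p) hG, abs_rpow_rpow_div hp, Real.rpow_two,
      sq_abs]
  simpa only [hquad] using
    (HasSecondDerivLE.sub_const_sq t₀).mul_const (Real.rpow_nonneg hG (2 / p))

lemma hasSecondDerivLE_rpow_integral_of_pos (hp : 2 ≤ p) (hu : MemLp u (ENNReal.ofReal p) μ)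
    (hv : MemLp v (ENNReal.ofReal p) μ) (hpos : ∀ t : ℝ, 0 < ∫ z, |u z + t * v z| ^ p ∂μ) :
    HasSecondDerivLE (fun t => (∫ z, |u z + t * v z| ^ p ∂μ) ^ (2 / p))
      (fun _ => 2 * (p - 1) * (∫ z, |v z| ^ p ∂μ) ^ (2 / p)) := by
  have hp0 : 0 < p := by linarith
  refine ((hasSecondDerivLE_integral_abs_add_mul_rpow hp hu hv).rpow_const hpos
    (div_nonneg zero_le_two hp0.le) ((div_le_one hp0).2 hp)).mono fun t => le_of_eq ?_
  set F := ∫ z, |u z + t * v z| ^ p ∂μ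
  set G := ∫ z, |v z| ^ p ∂μ
  have hcancel : F ^ (2 / p - 1) * F ^ ((p - 2) / p) = 1 := by
    rw [← Real.rpow_add (hpos t), sub_div, div_self hp0.ne', sub_add_sub_cancel', sub_self,
      Real.rpow_zero]
  calc 2 / p * F ^ (2 / p - 1) * (p * (p - 1) * (F ^ ((p - 2) / p) * G ^ (2 / p)))
      = 2 / p * p * (p - 1) * (F ^ (2 / p - 1) * F ^ ((p - 2) / p)) * G ^ (2 / p) := by ring
    _ = 2 * (p - 1) * G ^ (2 / p) := by rw [hcancel, div_mul_cancel₀ _ hp0.ne', mul_one]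

lemma memLp_comp_of_mem_span {X : Type*} {S : Set (X → ℝ)} {ξ : Ω → X} {q : ENNReal}
    (hS : ∀ k ∈ S, MemLp (fun z => k (ξ z)) q μ) {f : X → ℝ} (hf : f ∈ Submodule.span ℝ S) :
    MemLp (fun z => f (ξ z)) q μ := by
  induction hf using Submodule.span_induction with
  | mem k hk => exact hS k hk
  | zero => exact MemLp.zero
  | add a b _ _ ha hb => exact ha.add hb
  | smul c a _ ha => exact ha.const_mul c

theorem pnorm_loss_second_derivative_general (hp : 2 ≤ p) (hu : MemLp u (ENNReal.ofReal p) μ)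
    (hv : MemLp v (ENNReal.ofReal p) μ) :
    HasSecondDerivLE (fun t => (∫ z, |u z + t * v z| ^ p ∂μ) ^ (2 / p) / (2 * (p - 1)))
      (fun _ => (∫ z, |v z| ^ p ∂μ) ^ (2 / p)) := by
  have hc : 0 < 2 * (p - 1) := by linarith
  have hnonneg (w : Ω → ℝ) : 0 ≤ ∫ z, |w z| ^ p ∂μ :=
    integral_nonneg fun z => Real.rpow_nonneg (abs_nonneg _) p
  have hbound : HasSecondDerivLE (fun t => (∫ z, |u z + t * v z| ^ p ∂μ) ^ (2 / p))
      (fun _ => 2 * (p - 1) * (∫ z, |v z| ^ p ∂μ) ^ (2 / p)) := by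
    by_cases hzero : ∃ t₀ : ℝ, ∫ z, |u z + t₀ * v z| ^ p ∂μ = 0
    · obtain ⟨t₀, h0⟩ := hzero
      exact (hasSecondDerivLE_rpow_integral_of_eq_zero (by linarith) hu hv h0).mono fun _ =>
        mul_le_mul_of_nonneg_right (by linarith) (Real.rpow_nonneg (hnonneg v) _)
    · push Not at hzero
      exact hasSecondDerivLE_rpow_integral_of_pos hp hu hv fun t =>
        (hnonneg _).lt_of_ne' (hzero t)
  exact (hbound.div_const hc.le).mono fun _ => (mul_div_cancel_left₀ _ hc.ne').le

end Integrals

/-- Section A.1.5: second-derivative bound for the `p`-norm loss (`p ≥ 2`). With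
`A f = (E |f(X) - Y|^p)^{2/p} / (2(p-1))`, `E|Y|^p < ∞` and `sup_{g ∈ S} E|g(X)|^p ≤ 1`,
for every `f` in the span of `S` and `g ∈ S`, the function `t ↦ A (f + t g)` is twice
differentiable and its second derivative at every `h ∈ ℝ` is at most
`(E|g(X)|^p)^{2/p} ≤ 1`. -/
theorem pnorm_loss_second_derivative {X : Type*} [MeasurableSpace X]
    (p : ℝ) (hp : 2 ≤ p)
    (S : Set (X → ℝ))
    (hSmeas : ∀ g ∈ S, Measurable g)
    (D : Measure (X × ℝ)) [IsProbabilityMeasure D]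
    (hY : Integrable (fun z : X × ℝ => |z.2| ^ p) D)
    (hSInt : ∀ g ∈ S, Integrable (fun z : X × ℝ => |g z.1| ^ p) D)
    (hSbd : ∀ g ∈ S, (∫ z, |g z.1| ^ p ∂D) ≤ 1)
    (f : X → ℝ) (hf : f ∈ Submodule.span ℝ S) (g : X → ℝ) (hg : g ∈ S) :
    ∃ d1 d2 : ℝ → ℝ,
      (∀ t : ℝ, HasDerivAt
        (fun u : ℝ => (∫ z, |(f + u • g) z.1 - z.2| ^ p ∂D) ^ (2 / p) / (2 * (p - 1)))
        (d1 t) t) ∧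
      (∀ t : ℝ, HasDerivAt d1 (d2 t) t) ∧
      (∀ h : ℝ, d2 h ≤ (∫ z, |g z.1| ^ p ∂D) ^ (2 / p)) ∧
      (∫ z, |g z.1| ^ p ∂D) ^ (2 / p) ≤ 1 := by
  have hp0 : 0 < p := by linarith
  have hSp (k : X → ℝ) (hk : k ∈ S) : MemLp (fun z : X × ℝ => k z.1) (ENNReal.ofReal p) D :=
    (integrable_abs_rpow_iff_memLp hp0
      ((hSmeas k hk).comp measurable_fst).aestronglyMeasurable).1 (hSInt k hk)
  have hYp : MemLp (fun z : X × ℝ => z.2) (ENNReal.ofReal p) D :=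
    (integrable_abs_rpow_iff_memLp hp0 measurable_snd.aestronglyMeasurable).1 hY
  obtain ⟨d1, d2, hd1, hd2, hle⟩ := pnorm_loss_second_derivative_general hp
    ((memLp_comp_of_mem_span hSp hf).sub hYp) (hSp g hg)
  refine ⟨d1, d2, fun t => ?_, hd2, hle, Real.rpow_le_one
    (integral_nonneg fun z => Real.rpow_nonneg (abs_nonneg _) p) (hSbd g hg) (by positivity)⟩
  simpa only [Pi.add_apply, Pi.sub_apply, Pi.smul_apply, smul_eq_mul, sub_add_eq_add_sub]
    using hd1 t
end
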